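/- arXiv:2408.06203 — 3 statements merged into one kernel-verified Lean document; each statement's English description precedes it below -/
import Mathlib

section
/- For every integer m ≥ 1, the Mehta integral satisfies Z_m = 2^{3m/2} ∏_{j=0}^{m-1} Γ((j+3)/2), where Γ is the Gamma function. Equivalently, Z_m = (2π)^{m/2} ∏_{j=0}^{m-1} Γ((j+3)/2)/Γ(3/2). -/
/-!
The integrals `Z_n` satisfy a two-step recursion, `Z_{n+2} = 2 (n+2) (n+1) ‖P_n‖² Z_n`, where `P_n`
is the monic orthogonal polynomial of degree `n` for the weight `exp (-x ^ 2)`, with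
`‖P_n‖² = √π n! / 2 ^ n`. Together with `Z_0 = 1`, `Z_1 = √(2π)` and the duplication formula for
`Γ` this gives the closed form.

Put `w x = exp (-x ^ 2 / 2)`. As `|Δ(x)| = sgn(Δ(x)) Δ(x)` and a Vandermonde determinant may be
written through any monic polynomials `p_0, …, p_{n-1}`, one has `Z_n = J (p_0 w, …, p_{n-1} w)`
(`mehtaZ_eq_J`), where `J h = ∫ sgn(Δ(x)) det (h_j(x_i)) dx`.

The key is a Pfaffian-type expansion (`J_expand`) of `J (h_0, …, h_n, F')` for `F` vanishing at
infinity. Expanding the determinant along its last column isolates one variable `y` in an integral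
`∫ F'(y) ∏_j sgn(x_j - y) dy`. The sign product is piecewise constant with jumps at the `x_j`, so
that this integral equals `2 ∑_k F(x_k) ∏_{j ≠ k} sgn(x_j - x_k)` (`integral_deriv_mul_prod_sg`).
The product over `j ≠ k` cancels `x_k` out of `sgn(Δ(x))`; expanding what is left along the
`k`-th row gives a combination of the numbers `(∫ F h_j) J (h without h_j)`.

Take `h_j = P_j w` for `j ≤ n` and `F = -P_n w`: then `F'` is a monic polynomial of degree `n + 1`
times `w`, and by orthogonality only the term `j = n` survives.
-/

open MeasureTheory Real Finset

/-- The Mehta integral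
`Z_m = ∫_{ℝ^m} (∏_{1≤i<j≤m} |λ_i − λ_j|) ∏_{i=1}^m e^{−λ_i²/2} dλ`. -/
noncomputable def mehtaZ (m : ℕ) : ℝ :=
  ∫ lam : Fin m → ℝ,
    (∏ i : Fin m, ∏ j ∈ Finset.univ.filter (fun j => i < j), |lam i - lam j|) *
      ∏ i : Fin m, Real.exp (-(lam i) ^ 2 / 2)

/-! ### Signs and the Vandermonde determinant -/

/-- The real-valued sign function. -/
noncomputable def sg (a : ℝ) : ℝ := (SignType.sign a : ℝ)

lemma sg_mul (a b : ℝ) : sg (a * b) = sg a * sg b := by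
  simp [sg, sign_mul]

lemma sg_prod {ι : Type*} (s : Finset ι) (f : ι → ℝ) :
    sg (∏ i ∈ s, f i) = ∏ i ∈ s, sg (f i) := by
  classical
  induction s using Finset.induction_on with
  | empty => simp [sg]
  | insert a s ha ih => rw [prod_insert ha, prod_insert ha, sg_mul, ih]

lemma sg_pos {a : ℝ} (h : 0 < a) : sg a = 1 := by simp [sg, sign_pos h]
lemma sg_neg {a : ℝ} (h : a < 0) : sg a = -1 := by simp [sg, sign_neg h]
lemma sg_mul_self {a : ℝ} (h : a ≠ 0) : sg a * sg a = 1 := by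
  rcases lt_or_gt_of_ne h with h | h
  · simp [sg_neg h]
  · simp [sg_pos h]

lemma abs_sg_le (a : ℝ) : |sg a| ≤ 1 := by
  rcases lt_trichotomy a 0 with h | h | h
  · simp [sg_neg h]
  · simp [sg, h]
  · simp [sg_pos h]

lemma sg_neg_one_pow (k : ℕ) : sg ((-1) ^ k) = (-1) ^ k := by
  rcases neg_one_pow_eq_or ℝ k with h | h <;> rw [h]
  · exact sg_pos one_pos
  · exact sg_neg (by norm_num)

lemma measurable_sg : Measurable sg := by
  have : sg = fun a : ℝ => if 0 < a then 1 else if a < 0 then -1 else 0 := by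
    ext a
    rcases lt_trichotomy a 0 with h | h | h
    · simp [sg_neg h, h, not_lt.2 h.le]
    · simp [sg, h]
    · simp [sg_pos h, h]
  rw [this]
  exact Measurable.ite measurableSet_Ioi measurable_const
    (Measurable.ite measurableSet_Iio measurable_const measurable_const)

/-- The sign of the Vandermonde determinant of `x`: it turns `Δ(x)` into `|Δ(x)|`. -/
noncomputable def vs {n : ℕ} (x : Fin n → ℝ) : ℝ := sg (Matrix.vandermonde x).det

lemma measurable_vs {n : ℕ} : Measurable (vs (n := n)) := by
  refine measurable_sg.comp (Continuous.measurable ?_)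
  refine Continuous.matrix_det (continuous_matrix fun i j => ?_)
  simp only [Matrix.vandermonde_apply]
  fun_prop

lemma abs_vs_le {n : ℕ} (x : Fin n → ℝ) : |vs x| ≤ 1 := abs_sg_le _

/-- Splitting the point `x k` off the Vandermonde sign. -/
lemma vs_succAbove {n : ℕ} (x : Fin (n + 1) → ℝ) (k : Fin (n + 1)) :
    vs x = (-1) ^ (k : ℕ) * (∏ j, sg (x (k.succAbove j) - x k)) *
      vs (fun j => x (k.succAbove j)) := by
  -- `x` is the tuple starting with `x k`, permuted by the cycle `k.cycleRange`
  have hx : x = (Fin.cons (x k) (fun j => x (k.succAbove j)) : Fin (n + 1) → ℝ) ∘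
      k.cycleRange := by
    ext i
    rcases Fin.eq_self_or_eq_succAbove k i with rfl | ⟨j, rfl⟩
    · simp
    · simp [Fin.cycleRange_succAbove]
  have key : (Matrix.vandermonde x).det = (-1) ^ (k : ℕ) *
      ((∏ j, (x (k.succAbove j) - x k)) *
        (Matrix.vandermonde (fun j => x (k.succAbove j))).det) := by
    have h1 : Matrix.vandermonde x = (Matrix.vandermonde
        (Fin.cons (x k) (fun j => x (k.succAbove j)) : Fin (n + 1) → ℝ)).submatrix
        k.cycleRange id := by
      conv_lhs => rw [hx]
      rfl
    rw [h1, Matrix.det_permute, Fin.sign_cycleRange, Matrix.det_vandermonde,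
      Matrix.det_vandermonde, Fin.prod_univ_succ]
    have h2 : ∀ y : Fin n → ℝ, ∏ j ∈ Ioi (0 : Fin (n + 1)),
        ((Fin.cons (x k) y : Fin (n + 1) → ℝ) j - x k) = ∏ j, (y j - x k) := by
      intro y
      rw [Fin.Ioi_zero_eq_map, prod_map]
      simp
    have h3 : ∀ (y : Fin n → ℝ) (i : Fin n), ∏ j ∈ Ioi i.succ,
        ((Fin.cons (x k) y : Fin (n + 1) → ℝ) j - y i) = ∏ j ∈ Ioi i, (y j - y i) := by
      intro y i
      rw [← Fin.map_succEmb_Ioi, prod_map]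
      simp
    simp only [Fin.cons_zero, Fin.cons_succ, h2, h3]
    push_cast
    rfl
  rw [vs, vs, key, sg_mul, sg_mul, sg_prod, sg_neg_one_pow, mul_assoc]

/-! ### Integrating out one variable -/

/-- Integrating the derivative of `F` against `∏ sgn (x_j - y)`, a function of `y` which jumps at
each of the distinct points `x_j`. -/
lemma integral_deriv_mul_prod_sg {ι : Type*} [DecidableEq ι] (F f : ℝ → ℝ)
    (hF : ∀ y, HasDerivAt F (f y) y) (hFi : Integrable F) (hfi : Integrable f)
    (x : ι → ℝ) (hx : Function.Injective x) (s : Finset ι) :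
    ∫ y, f y * ∏ j ∈ s, sg (x j - y) =
      2 * ∑ k ∈ s, F (x k) * ∏ j ∈ s.erase k, sg (x j - x k) := by
  induction s using Finset.induction_on_max_value x with
  | empty => simpa using integral_eq_zero_of_hasDerivAt_of_integrable hF hfi hFi
  | insert a s ha hmax ih =>
    have hlt : ∀ i ∈ s, x i < x a := fun i hi =>
      lt_of_le_of_ne (hmax i hi) fun h => ha (hx h ▸ hi)
    have htop : Filter.Tendsto F Filter.atTop (nhds 0) :=
      tendsto_zero_of_hasDerivAt_of_integrableOn_Ioi (a := 0) (fun y _ => hF y)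
        hfi.integrableOn hFi.integrableOn
    have hIoi : ∫ y in Set.Ioi (x a), f y = - F (x a) := by
      rw [integral_Ioi_of_hasDerivAt_of_tendsto' (fun y _ => hF y) hfi.integrableOn htop]
      ring
    have hg : Integrable (fun y => f y * ∏ j ∈ s, sg (x j - y)) := by
      have := Integrable.bdd_mul (c := 1) (f := fun y => ∏ j ∈ s, sg (x j - y)) hfi
        (Measurable.aestronglyMeasurable (Finset.measurable_prod _ fun j _ =>
          measurable_sg.comp (measurable_const.sub measurable_id)))
        (Filter.Eventually.of_forall fun y => by
          rw [norm_eq_abs, abs_prod]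
          exact prod_le_one (fun _ _ => abs_nonneg _) fun _ _ => abs_sg_le _)
      simpa only [mul_comm] using this
    -- on the right of the largest point `x a` all factors equal `-1`
    have hae : (fun y => f y * ∏ j ∈ insert a s, sg (x j - y)) =ᵐ[volume]
        fun y => f y * ∏ j ∈ s, sg (x j - y) -
          2 * (-1) ^ #s * (Set.Ioi (x a)).indicator f y := by
      have : ∀ᵐ y : ℝ, y ≠ x a := by simp [ae_iff]
      filter_upwards [this] with y hy
      rw [prod_insert ha]
      rcases lt_or_gt_of_ne hy with h | h
      · rw [sg_pos (sub_pos.2 h), Set.indicator_of_notMem (by simpa using h.le)]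
        ring
      · rw [sg_neg (sub_neg.2 h), Set.indicator_of_mem (by simpa using h),
          prod_congr rfl fun j hj => sg_neg (sub_neg.2 ((hlt j hj).trans h)), prod_const]
        ring
    have hind : Integrable ((Set.Ioi (x a)).indicator f) := hfi.indicator measurableSet_Ioi
    rw [integral_congr_ae hae, integral_sub hg (hind.const_mul _), ih, integral_const_mul,
      integral_indicator measurableSet_Ioi, hIoi, sum_insert ha, erase_insert ha,
      prod_congr rfl fun j hj => sg_neg (sub_neg.2 (hlt j hj)), prod_const]
    have : ∀ k ∈ s, F (x k) * ∏ j ∈ (insert a s).erase k, sg (x j - x k) =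
        F (x k) * ∏ j ∈ s.erase k, sg (x j - x k) := by
      intro k hk
      have hne : a ≠ k := fun h => ha (h ▸ hk)
      rw [erase_insert_of_ne hne, prod_insert (fun h => ha (mem_of_mem_erase h)),
        sg_pos (sub_pos.2 (hlt k hk)), one_mul]
    rw [sum_congr rfl this]
    ring

/-! ### The signed determinantal integral and its expansion -/

/-- `∫ sgn(Δ(x)) det (h_j(x_i)) dx`, an alternating multilinear form in `h`. -/
noncomputable def J {n : ℕ} (h : Fin n → ℝ → ℝ) : ℝ :=
  ∫ x : Fin n → ℝ, vs x * (Matrix.of fun i j => h j (x i)).det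

lemma integrable_det {n : ℕ} (h : Fin n → ℝ → ℝ) (hi : ∀ j, Integrable (h j)) :
    Integrable fun x : Fin n → ℝ => (Matrix.of fun i j => h j (x i)).det := by
  simp_rw [← Matrix.det_transpose (Matrix.of _), Matrix.det_apply']
  refine integrable_finsetSum _ fun σ _ => Integrable.const_mul ?_ _
  simp only [Matrix.transpose_apply, Matrix.of_apply]
  exact Integrable.fintype_prod (f := fun i y => h (σ i) y) fun i => hi _

lemma integrable_vs_mul {n : ℕ} {f : (Fin n → ℝ) → ℝ} (hf : Integrable f) :
    Integrable fun x => vs x * f x :=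
  hf.bdd_mul (c := 1) measurable_vs.aestronglyMeasurable
    (Filter.Eventually.of_forall fun x => abs_vs_le x)

lemma mp_split {n : ℕ} (k : Fin (n + 1)) :
    MeasurePreserving (MeasurableEquiv.piFinSuccAbove (fun _ => ℝ) k)
      (volume : Measure (Fin (n + 1) → ℝ)) (volume : Measure (ℝ × (Fin n → ℝ))) :=
  volume_preserving_piFinSuccAbove (fun _ => ℝ) k

lemma integral_split {n : ℕ} (k : Fin (n + 1)) (G : ℝ × (Fin n → ℝ) → ℝ) :
    ∫ x : Fin (n + 1) → ℝ, G (x k, fun j => x (k.succAbove j)) = ∫ z, G z :=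
  (mp_split k).integral_comp' (g := G)

lemma integrable_split {n : ℕ} (k : Fin (n + 1)) {G : ℝ × (Fin n → ℝ) → ℝ}
    (hG : Integrable G) :
    Integrable fun x : Fin (n + 1) → ℝ => G (x k, fun j => x (k.succAbove j)) :=
  (mp_split k).integrable_comp_of_integrable hG

lemma prod_erase_eq_succAbove {n : ℕ} (k : Fin (n + 1)) (g : Fin (n + 1) → ℝ) :
    ∏ j ∈ univ.erase k, g j = ∏ j, g (k.succAbove j) := by
  rw [Fin.univ_succAbove n k, erase_cons, prod_map]
  rfl

/-- For distinct points, multiplying by the signs of the differences with `x k` removes `x k` from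
the Vandermonde sign. -/
lemma vs_mul_prod {n : ℕ} (x : Fin (n + 1) → ℝ) (hx : Function.Injective x)
    (k : Fin (n + 1)) :
    vs x * ∏ j, sg (x (k.succAbove j) - x k) =
      (-1) ^ (k : ℕ) * vs (fun j => x (k.succAbove j)) := by
  have : (∏ j, sg (x (k.succAbove j) - x k)) * ∏ j, sg (x (k.succAbove j) - x k) = 1 := by
    rw [← prod_mul_distrib]
    exact prod_eq_one fun j _ => sg_mul_self
      (sub_ne_zero.2 fun h => Fin.succAbove_ne k j (hx h))
  rw [vs_succAbove x k]
  linear_combination (-1) ^ (k : ℕ) * vs (fun j => x (k.succAbove j)) * this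

/-- Expansion along the last column, whose entries are values of `F'`, followed by integration over
the variable that this isolates. -/
lemma J_step_one {n : ℕ} (h : Fin (n + 2) → ℝ → ℝ) (hi : ∀ j, Integrable (h j)) (F : ℝ → ℝ)
    (hF : ∀ y, HasDerivAt F (h (Fin.last _) y) y) (hFi : Integrable F) :
    J h = (-1) ^ (n + 1) * (n + 2) * ∫ x : Fin (n + 1) → ℝ,
      2 * (∑ k : Fin (n + 1), (-1) ^ (k : ℕ) * F (x k) * vs (fun j => x (k.succAbove j))) *
        (Matrix.of fun i j => h (Fin.castSucc j) (x i)).det := by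
  set D : (Fin (n + 1) → ℝ) → ℝ :=
    fun x => (Matrix.of fun i j => h (Fin.castSucc j) (x i)).det with hD
  have hDi : Integrable D := integrable_det (fun j => h (Fin.castSucc j)) fun j => hi _
  set G : ℝ × (Fin (n + 1) → ℝ) → ℝ := fun z =>
    (∏ j, sg (z.2 j - z.1)) * (h (Fin.last _) z.1 * (vs z.2 * D z.2)) with hG
  have hGi : Integrable G := by
    refine Integrable.bdd_mul (c := 1)
      ((hi (Fin.last _)).mul_prod (integrable_vs_mul hDi)) ?_ ?_
    · refine Measurable.aestronglyMeasurable (Finset.measurable_prod _ fun j _ =>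
        measurable_sg.comp (((measurable_pi_apply j).comp measurable_snd).sub measurable_fst))
    · refine Filter.Eventually.of_forall fun z => ?_
      rw [norm_eq_abs, abs_prod]
      exact prod_le_one (fun _ _ => abs_nonneg _) fun _ _ => abs_sg_le _
  have h1 : ∀ x : Fin (n + 2) → ℝ, vs x * (Matrix.of fun i j => h j (x i)).det =
      ∑ k : Fin (n + 2), (-1) ^ (n + 1) * G (x k, fun j => x (k.succAbove j)) := by
    intro x
    rw [Matrix.det_succ_column _ (Fin.last _), mul_sum]
    refine sum_congr rfl fun k _ => ?_
    have hsq : ((-1 : ℝ) ^ (k : ℕ)) * (-1) ^ (k : ℕ) = 1 := by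
      rw [← mul_pow]; simp
    have hsub : ((Matrix.of fun i j => h j (x i)).submatrix k.succAbove
        (Fin.last (n + 1)).succAbove).det = D fun j => x (k.succAbove j) := by
      rw [hD]
      congr 1
      ext i j
      simp
    rw [hsub, vs_succAbove x k, hG, Fin.val_last, pow_add]
    simp only [Matrix.of_apply]
    linear_combination ((-1) ^ (n + 1) * (∏ j, sg (x (k.succAbove j) - x k)) *
      (h (Fin.last _) (x k) * (vs (fun j => x (k.succAbove j)) *
        D fun j => x (k.succAbove j)))) * hsq
  have h2 : J h = (-1) ^ (n + 1) * (n + 2) * ∫ z, G z := by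
    rw [J]
    simp_rw [h1]
    rw [integral_finsetSum _ fun k _ => (integrable_split k hGi).const_mul _]
    simp_rw [integral_const_mul, integral_split]
    simp
    ring
  rw [h2]
  congr 1
  rw [show (volume : Measure (ℝ × (Fin (n + 1) → ℝ))) = (volume : Measure ℝ).prod volume from rfl,
    integral_prod_symm _ hGi]
  congr 1
  ext x
  by_cases hx : Function.Injective x
  · have : ∀ y, G (y, x) = vs x * D x * (h (Fin.last _) y * ∏ j, sg (x j - y)) := by
      intro y
      simp only [hG]
      ring
    simp_rw [this]
    rw [integral_const_mul, integral_deriv_mul_prod_sg F _ hF hFi (hi _) x hx]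
    have h3 : vs x * ∑ k, F (x k) * ∏ j ∈ univ.erase k, sg (x j - x k) =
        ∑ k : Fin (n + 1), (-1) ^ (k : ℕ) * F (x k) * vs (fun j => x (k.succAbove j)) := by
      rw [mul_sum]
      refine sum_congr rfl fun k _ => ?_
      rw [prod_erase_eq_succAbove k (fun j => sg (x j - x k))]
      linear_combination F (x k) * vs_mul_prod x hx k
    rw [← h3]
    ring
  · -- two equal points make two rows of the determinant equal
    have hD0 : D x = 0 := by
      simp only [Function.Injective, not_forall] at hx
      obtain ⟨i, j, hij, hne⟩ := hx
      exact Matrix.det_zero_of_row_eq hne (by ext l; simp [hij])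
    have hD0' := hD0
    simp only [hD] at hD0'
    rw [hD0']
    simp [hG, hD0]

/-- Pfaffian-type expansion: the functional on `n + 2` functions, the last of which is `F'`,
is a combination of its values on `n` functions: the last one and one other function are paired
through `∫ F h_j`. -/
lemma J_expand {n : ℕ} (h : Fin (n + 2) → ℝ → ℝ) (hi : ∀ j, Integrable (h j)) (F : ℝ → ℝ)
    (hF : ∀ y, HasDerivAt F (h (Fin.last _) y) y) (hFi : Integrable F)
    (hFh : ∀ j : Fin (n + 1), Integrable fun y => F y * h (Fin.castSucc j) y) :
    J h = (-1) ^ (n + 1) * 2 * (n + 2) * (n + 1) * ∑ j : Fin (n + 1), (-1) ^ (j : ℕ) *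
      (∫ y, F y * h (Fin.castSucc j) y) * J (fun i => h (Fin.castSucc (j.succAbove i))) := by
  rw [J_step_one h hi F hF hFi]
  set G : Fin (n + 1) → ℝ × (Fin n → ℝ) → ℝ := fun j z => (F z.1 * h (Fin.castSucc j) z.1) *
    (vs z.2 * (Matrix.of fun i l => h (Fin.castSucc (j.succAbove l)) (z.2 i)).det) with hG
  have hGi : ∀ j, Integrable (G j) := fun j => (hFh j).mul_prod
    (integrable_vs_mul (integrable_det (fun l => h (Fin.castSucc (j.succAbove l)))
      fun l => hi _))
  have hGint : ∀ j, ∫ z, G j z = (∫ y, F y * h (Fin.castSucc j) y) *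
      J (fun i => h (Fin.castSucc (j.succAbove i))) := fun j =>
    integral_prod_mul (μ := volume) (ν := volume) (fun y => F y * h (Fin.castSucc j) y)
      fun x : Fin n → ℝ => vs x *
        (Matrix.of fun i l => h (Fin.castSucc (j.succAbove l)) (x i)).det
  have h1 : ∀ x : Fin (n + 1) → ℝ,
      2 * (∑ k : Fin (n + 1), (-1) ^ (k : ℕ) * F (x k) * vs (fun j => x (k.succAbove j))) *
        (Matrix.of fun i j => h (Fin.castSucc j) (x i)).det =
      ∑ k, ∑ j : Fin (n + 1), 2 * (-1) ^ (j : ℕ) * G j (x k, fun j => x (k.succAbove j)) := by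
    intro x
    rw [mul_sum, sum_mul]
    refine sum_congr rfl fun k _ => ?_
    rw [Matrix.det_succ_row _ k, mul_sum]
    refine sum_congr rfl fun j _ => ?_
    have hsq : ((-1 : ℝ) ^ (k : ℕ)) * (-1) ^ (k : ℕ) = 1 := by
      rw [← mul_pow]; simp
    have hsub : (Matrix.of fun i j => h (Fin.castSucc j) (x i)).submatrix k.succAbove
        j.succAbove = Matrix.of fun i l => h (Fin.castSucc (j.succAbove l))
          (x (k.succAbove i)) := rfl
    rw [hsub]
    simp only [hG, Matrix.of_apply, pow_add]
    linear_combination (2 * (-1) ^ (j : ℕ) * F (x k) * vs (fun j => x (k.succAbove j)) *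
      h (Fin.castSucc j) (x k) * (Matrix.of fun i l => h (Fin.castSucc (j.succAbove l))
          (x (k.succAbove i))).det) * hsq
  simp_rw [h1]
  rw [integral_finsetSum _ fun k _ => integrable_finsetSum _ fun j _ =>
    (integrable_split k (hGi j)).const_mul _]
  have h2 : ∀ k : Fin (n + 1), ∫ x : Fin (n + 1) → ℝ,
      ∑ j : Fin (n + 1), 2 * (-1) ^ (j : ℕ) * G j (x k, fun j => x (k.succAbove j)) =
      2 * ∑ j : Fin (n + 1), (-1) ^ (j : ℕ) *
      (∫ y, F y * h (Fin.castSucc j) y) * J (fun i => h (Fin.castSucc (j.succAbove i))) := by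
    intro k
    rw [integral_finsetSum _ fun j _ => (integrable_split k (hGi j)).const_mul _, mul_sum]
    refine sum_congr rfl fun j _ => ?_
    rw [integral_const_mul, integral_split, hGint]
    ring
  simp_rw [h2]
  simp
  ring

/-! ### Polynomials times a Gaussian -/

open Polynomial

lemma integrable_poly_gauss (p : ℝ[X]) {b : ℝ} (hb : 0 < b) :
    Integrable fun x : ℝ => p.eval x * exp (-b * x ^ 2) := by
  simp_rw [eval_eq_sum_range, sum_mul]
  refine integrable_finsetSum _ fun i _ => ?_
  have := (integrable_rpow_mul_exp_neg_mul_sq hb (s := i)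
    (by have : (0 : ℝ) ≤ i := i.cast_nonneg
        linarith)).const_mul (p.coeff i)
  simpa [mul_assoc] using this

lemma hasDerivAt_poly_gauss (p : ℝ[X]) (b y : ℝ) :
    HasDerivAt (fun x : ℝ => p.eval x * exp (-b * x ^ 2))
      ((derivative p - C (2 * b) * X * p).eval y * exp (-b * y ^ 2)) y := by
  have h1 : HasDerivAt (fun x : ℝ => -b * x ^ 2) (-b * (2 * y)) y := by
    simpa using (hasDerivAt_pow 2 y).const_mul (-b)
  convert! (p.hasDerivAt y).mul h1.exp using 1
  simp
  ring

/-- The monic orthogonal polynomials for the weight `exp (-x ^ 2)`, that is `2 ^ (-n)` times the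
physicists' Hermite polynomials; the recursion reads
`(P n * exp (-x ^ 2))' = -2 * P (n + 1) * exp (-x ^ 2)`. -/
noncomputable def P : ℕ → ℝ[X]
  | 0 => 1
  | n + 1 => X * P n - C (1 / 2) * derivative (P n)

lemma monic_sub_aux {q r : ℝ[X]} {n : ℕ} (hq : q.Monic) (hn : q.natDegree = n) (c : ℝ)
    (hr : r = X * q - C c * derivative q) : r.Monic ∧ r.natDegree = n + 1 := by
  have hX : (X * q).Monic := monic_X.mul hq
  have hXd : (X * q).natDegree = n + 1 := by
    rw [monic_X.natDegree_mul hq, natDegree_X, hn, add_comm]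
  have hlt : (C c * derivative q).degree < (X * q).degree := by
    rw [degree_eq_natDegree hX.ne_zero, hXd]
    refine lt_of_le_of_lt degree_le_natDegree ?_
    have h1 : (C c * derivative q).natDegree ≤ q.natDegree - 1 :=
      (natDegree_C_mul_le _ _).trans (natDegree_derivative_le _)
    exact_mod_cast (by omega : (C c * derivative q).natDegree < n + 1)
  subst hr
  exact ⟨hX.sub_of_left hlt, by rw [natDegree_eq_of_degree_eq
    (degree_sub_eq_left_of_degree_lt hlt), hXd]⟩

lemma P_spec (n : ℕ) : (P n).Monic ∧ (P n).natDegree = n := by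
  induction n with
  | zero => simp [P]
  | succ n ih => exact monic_sub_aux ih.1 ih.2 (1 / 2) rfl

/-- Rodrigues' formula in weak form: `n` integrations by parts. It yields both the orthogonality
and the norms of the `P n`. -/
lemma integral_P_mul (n : ℕ) (q : ℝ[X]) :
    ∫ x, (P n * q).eval x * exp (-1 * x ^ 2) =
      (1 / 2) ^ n * ∫ x, ((derivative^[n]) q).eval x * exp (-1 * x ^ 2) := by
  induction n generalizing q with
  | zero => simp [P]
  | succ n ih =>
    have h0 := integral_eq_zero_of_hasDerivAt_of_integrable
      (hasDerivAt_poly_gauss (P n * q) 1) (integrable_poly_gauss _ one_pos)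
      (integrable_poly_gauss _ one_pos)
    have h1 : ∀ x, (P (n + 1) * q).eval x * exp (-1 * x ^ 2) =
        (1 / 2) * ((P n * derivative q).eval x * exp (-1 * x ^ 2)) - (1 / 2) *
        ((derivative (P n * q) - C (2 * 1) * X * (P n * q)).eval x * exp (-1 * x ^ 2)) := by
      intro x
      simp [P, derivative_mul]
      ring
    simp_rw [h1]
    rw [integral_sub ((integrable_poly_gauss _ one_pos).const_mul _)
      ((integrable_poly_gauss _ one_pos).const_mul _), integral_const_mul, integral_const_mul, h0,
      ih, Function.iterate_succ_apply, pow_succ]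
    ring

lemma integral_P_mul_of_lt {n : ℕ} {q : ℝ[X]} (hq : q.natDegree < n) :
    ∫ x, (P n * q).eval x * exp (-1 * x ^ 2) = 0 := by
  rw [integral_P_mul, iterate_derivative_eq_zero hq]
  simp

lemma integral_P_sq (n : ℕ) :
    ∫ x, (P n * P n).eval x * exp (-1 * x ^ 2) = (1 / 2) ^ n * (n.factorial * √π) := by
  have h : derivative^[n] (P n) = C (n.factorial : ℝ) := by
    have hd : (derivative^[n] (P n)).natDegree ≤ 0 := by
      have := natDegree_iterate_derivative (P n) n
      rw [(P_spec n).2] at this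
      omega
    rw [eq_C_of_natDegree_le_zero hd, coeff_iterate_derivative]
    have hc : (P n).coeff n = 1 := by
      have := (P_spec n).1
      rwa [Monic, leadingCoeff, (P_spec n).2] at this
    simp [hc, Nat.descFactorial_self]
  rw [integral_P_mul, h]
  simp only [eval_C]
  rw [integral_const_mul, integral_gaussian]
  simp

/-! ### The recursion for the Mehta integral and its solution -/

/-- Column operations on the Vandermonde determinant: any family of monic polynomials of the right
degrees computes the Mehta integral. -/
lemma mehtaZ_eq_J {n : ℕ} (p : Fin n → ℝ[X]) (hm : ∀ i, (p i).Monic)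
    (hd : ∀ i, (p i).natDegree = i) :
    mehtaZ n = J fun j x => (p j).eval x * exp (-(1 / 2) * x ^ 2) := by
  rw [mehtaZ, J]
  congr 1
  ext x
  have h1 : (Matrix.of fun i j => (p j).eval (x i) * exp (-(1 / 2) * (x i) ^ 2)).det =
      (∏ i, exp (-(x i) ^ 2 / 2)) * (Matrix.vandermonde x).det := by
    rw [Matrix.det_eval_matrixOfPolynomials_eq_det_vandermonde x p hd hm,
      ← Matrix.det_mul_column]
    congr 1
    ext i j
    simp only [Matrix.of_apply]
    rw [mul_comm, show -(1 / 2) * (x i) ^ 2 = -(x i) ^ 2 / 2 by ring]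
  have h2 : ∏ i : Fin n, ∏ j ∈ Finset.univ.filter (fun j => i < j), |x i - x j| =
      vs x * (Matrix.vandermonde x).det := by
    rw [vs, sg, sign_mul_self, Matrix.det_vandermonde, abs_prod]
    refine prod_congr rfl fun i _ => ?_
    rw [abs_prod]
    refine prod_congr ?_ fun j _ => abs_sub_comm _ _
    ext j
    simp
  rw [h1, h2]
  ring

lemma mehtaZ_add_two (n : ℕ) :
    mehtaZ (n + 2) = 2 * (n + 2) * (n + 1) * ((1 / 2) ^ n * (n.factorial * √π)) * mehtaZ n := by
  -- the last polynomial is chosen so that its product with the weight is `-(P n * weight)'`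
  set Q : ℝ[X] := X * P n - C 1 * derivative (P n) with hQ
  have hQs := monic_sub_aux (P_spec n).1 (P_spec n).2 1 hQ
  set p : Fin (n + 2) → ℝ[X] := Fin.snoc (α := fun _ => ℝ[X]) (fun j : Fin (n + 1) => P j) Q
    with hp
  have hpc : ∀ j : Fin (n + 1), p (Fin.castSucc j) = P j := fun j => by simp [hp]
  have hpl : p (Fin.last _) = Q := by simp [hp]
  have hb : (0 : ℝ) < 1 / 2 := by norm_num
  rw [mehtaZ_eq_J p
    (fun i => by
      refine Fin.lastCases ?_ (fun j => ?_) i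
      · rw [hpl]; exact hQs.1
      · rw [hpc]; exact (P_spec j).1)
    (fun i => by
      refine Fin.lastCases ?_ (fun j => ?_) i
      · rw [hpl]; exact hQs.2
      · rw [hpc]; exact (P_spec j).2)]
  have hmul : ∀ (j : ℕ) (y : ℝ), (-P n).eval y * exp (-(1 / 2) * y ^ 2) *
      ((P j).eval y * exp (-(1 / 2) * y ^ 2)) =
      - ((P n * P j).eval y * exp (-1 * y ^ 2)) := by
    intro j y
    rw [show -1 * y ^ 2 = -(1 / 2) * y ^ 2 + -(1 / 2) * y ^ 2 by ring, Real.exp_add]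
    simp
    ring
  rw [J_expand _ (fun j => integrable_poly_gauss _ hb)
    (fun y => (-P n).eval y * exp (-(1 / 2) * y ^ 2)) (fun y => by
      convert! hasDerivAt_poly_gauss (-P n) (1 / 2) y using 2
      rw [hpl, hQ]
      simp
      ring) (integrable_poly_gauss _ hb) (fun j => by
      simp only [hpc, hmul]
      exact (integrable_poly_gauss _ one_pos).neg)]
  simp only [hpc, hmul, integral_neg]
  rw [Fin.sum_univ_castSucc, sum_eq_zero fun j _ => by
    rw [integral_P_mul_of_lt (by rw [(P_spec _).2]; simp)]; simp]
  simp only [Fin.val_last, integral_P_sq, Fin.succAbove_last]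
  rw [mehtaZ_eq_J (fun j : Fin n => P j) (fun j => (P_spec j).1) (fun j => (P_spec j).2)]
  have hsq : ((-1 : ℝ) ^ n) * (-1) ^ n = 1 := by
    rw [← mul_pow]; simp
  simp only [Fin.val_castSucc, pow_succ (-1 : ℝ)]
  linear_combination (2 * (n + 2) * (n + 1) * ((1 / 2) ^ n * (n.factorial * √π)) *
    J fun (j : Fin n) x => (P j).eval x * exp (-(1 / 2) * x ^ 2)) * hsq

lemma mehtaZ_zero : mehtaZ 0 = 1 := by
  simp [mehtaZ, Measure.real, volume_pi]

lemma mehtaZ_one : mehtaZ 1 = √(2 * π) := by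
  rw [mehtaZ_eq_J (fun _ => 1) (fun _ => monic_one) (fun i => by simp), J]
  have : ∀ x : Fin 1 → ℝ, vs x * (Matrix.of fun i (_ : Fin 1) =>
      (1 : ℝ[X]).eval (x i) * exp (-(1 / 2) * x i ^ 2)).det = exp (-(1 / 2) * (x 0) ^ 2) := by
    intro x
    simp [vs, sg]
  simp_rw [this]
  have h := (volume_preserving_funUnique (Fin 1) ℝ).integral_comp'
    (g := fun y => exp (-(1 / 2) * y ^ 2))
  rw [integral_gaussian] at h
  convert! h using 2
  ring

lemma Gamma_three_half : Gamma (3 / 2) = √π / 2 := by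
  rw [show (3 / 2 : ℝ) = 1 / 2 + 1 by norm_num, Gamma_add_one (by norm_num),
    Gamma_one_half_eq]
  ring

lemma mehtaZ_eq (n : ℕ) : mehtaZ n = (2 : ℝ) ^ ((3 * (n : ℝ)) / 2) *
        ∏ j ∈ Finset.range n, Real.Gamma (((j : ℝ) + 3) / 2) := by
  induction n using Nat.twoStepInduction with
  | zero => simp [mehtaZ_zero]
  | one =>
    rw [mehtaZ_one]
    simp only [range_one, prod_singleton]
    norm_num
    rw [Gamma_three_half, show (3 / 2 : ℝ) = 1 + 1 / 2 by norm_num,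
      rpow_add two_pos, ← sqrt_eq_rpow]
    norm_num
    ring
  | more n ih _ =>
    rw [mehtaZ_add_two, ih, prod_range_succ, prod_range_succ]
    -- duplication formula, `Γ((n+3)/2) Γ((n+4)/2) = (n+2)! 2 ^ (-(n+2)) √π`
    have hG := Gamma_mul_Gamma_add_half (((n : ℝ) + 3) / 2)
    rw [show 2 * (((n : ℝ) + 3) / 2) = ((n + 2 : ℕ) : ℝ) + 1 by push_cast; ring,
      Gamma_nat_eq_factorial, show ((n : ℝ) + 3) / 2 + 1 / 2 = (((n + 1 : ℕ) : ℝ) + 3) / 2 by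
        push_cast; ring, show (1 : ℝ) - (((n + 2 : ℕ) : ℝ) + 1) = -((n + 2 : ℕ) : ℝ) by ring,
      rpow_neg two_pos.le, rpow_natCast] at hG
    rw [mul_assoc (∏ j ∈ Finset.range n, Real.Gamma (((j : ℝ) + 3) / 2)), hG,
      show (3 * ((n + 2 : ℕ) : ℝ)) / 2 = 3 * n / 2 + (3 : ℕ) by push_cast; ring,
      rpow_add two_pos, rpow_natCast, Nat.factorial_succ, Nat.factorial_succ, pow_add, one_div,
      inv_pow]
    push_cast
    field_simp
    ring

/-- For every integer `m ≥ 1`, `Z_m = 2^{3m/2} ∏_{j=0}^{m-1} Γ((j+3)/2)`; equivalently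
`Z_m = (2π)^{m/2} ∏_{j=0}^{m-1} Γ((j+3)/2)/Γ(3/2)`. -/
theorem mehta_integral_value (m : ℕ) (hm : 1 ≤ m) :
    mehtaZ m = (2 : ℝ) ^ ((3 * (m : ℝ)) / 2) *
        ∏ j ∈ Finset.range m, Real.Gamma (((j : ℝ) + 3) / 2) ∧
      mehtaZ m = (2 * Real.pi) ^ ((m : ℝ) / 2) *
        ∏ j ∈ Finset.range m, (Real.Gamma (((j : ℝ) + 3) / 2) / Real.Gamma (3 / 2)) := by
  refine ⟨mehtaZ_eq m, ?_⟩
  have h : (2 : ℝ) ^ ((3 * (m : ℝ)) / 2) * Gamma (3 / 2) ^ m = (2 * π) ^ ((m : ℝ) / 2) := by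
    rw [Gamma_three_half, show (3 * (m : ℝ)) / 2 = m / 2 + m by ring, rpow_add two_pos,
      mul_rpow two_pos.le pi_pos.le, rpow_natCast, div_pow, sqrt_eq_rpow, ← rpow_natCast,
      ← rpow_natCast, ← rpow_mul pi_pos.le]
    rw [show 1 / 2 * (m : ℝ) = m / 2 by ring]
    field_simp
  have hG : Gamma (3 / 2) ^ m ≠ 0 := (pow_pos (Gamma_pos_of_pos (by norm_num)) m).ne'
  rw [mehtaZ_eq, prod_div_distrib, prod_const, card_range, ← h]
  field_simp
end

section
/- For every integer m ≥ 1, the consecutive Mehta integrals satisfy Z_{m+1} = 2^{3/2} Γ((m+3)/2) · Z_m, where Γ is the Gamma function. -/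
/-!
The idea is to integrate one kernel over interlacing pairs `l ≺ u`, that is
`u_0 < l_0 < u_1 < ⋯ < l_{n-1} < u_n`, in the two possible orders. With `Δ` the absolute
Vandermonde product, the kernel is

`Δ(l) Δ(u) ∏_{i,j} |l_i − u_j|^{-1/2} exp(−∑ u_j² / 2)`.

*Integrating `u` first.* Put `P(x) = ∏ (x − u_j)` and `L(x) = ∏ (x − l_i)`. Then
`P / L = x − h − ∑ q_i / (x − l_i)`: the `u` are the eigenvalues of the matrix obtained by bordering
`diag(l)` with corner `h` and squared border entries `q_i`. The map `u ↦ (h, q)` is a bijection from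
the `u` interlacing with `l` onto `ℝ × (0,∞)^n` (`qmap_injOn`, `qmap_image`), its Jacobian is
`Δ(u) / Δ(l)` (`abs_det_borderMat`), `∏ q_i = ∏ |l_i − u_j| / Δ(l)²`, and
`∑ u² = ∑ l² + h² + 2 ∑ q` (`sum_sq_eq`). Hence
`∫ Δ(u) ∏ |l_i − u_j|^{-1/2} exp(−∑ u²/2) du = √(2π) Γ(1/2)^n exp(−∑ l²/2)` (`lintegral_roots`).

*Integrating `l` first.* Write `r L / P = ∑ w_j / (x − u_j)`. The map `(r, l) ↦ w` is a bijection
onto `(0,∞)^{n+1}` (`wmap_injOn`, `wmap_image`) with Jacobian `r^n Δ(l) / Δ(u)`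
(`abs_det_residueMat`), and `∑ w = r` (`sum_wmap`). Integrating `∏ w_j^{-1/2} e^{-w_j}` gives
`Γ((n+1)/2) ∫ Δ(l) ∏ |l_i − u_j|^{-1/2} dl = Γ(1/2)^{n+1}` (`lintegral_critical`), the
Dixon–Anderson integral.

Comparing the two, the Mehta integrals over the ordered chamber satisfy
`√(2π) Γ(1/2)^n Γ((n+1)/2) M_n = Γ(1/2)^{n+1} M_{n+1}` (`chamber_succ`), and `Z_n = n! M_n`.
All integrals are taken in `[0, ∞]`, so no integrability has to be checked.
-/

open MeasureTheory Real Finset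

/-! ### Jacobian determinants -/

/-- The absolute Vandermonde product `∏_{i<j} |x_i − x_j|`. -/
noncomputable def vdm {n : ℕ} (x : Fin n → ℝ) : ℝ :=
  ∏ i : Fin n, ∏ j ∈ Finset.univ.filter (fun j => i < j), |x i - x j|

/-- `∏_{k ≠ j} (x_j − x_k)`, the derivative at `x_j` of the monic polynomial with roots `x`. -/
noncomputable def node {n : ℕ} (x : Fin n → ℝ) (j : Fin n) : ℝ :=
  ∏ k ∈ univ.erase j, (x j - x k)

lemma node_ne_zero {n : ℕ} {x : Fin n → ℝ} (hx : Function.Injective x) (j : Fin n) :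
    node x j ≠ 0 := by
  refine Finset.prod_ne_zero_iff.2 fun k hk => sub_ne_zero.2 fun h => ?_
  exact (Finset.mem_erase.1 hk).1 (hx h).symm

lemma vdm_pos {n : ℕ} {x : Fin n → ℝ} (hx : Function.Injective x) : 0 < vdm x := by
  refine Finset.prod_pos fun i _ => Finset.prod_pos fun j hj => abs_pos.2 (sub_ne_zero.2 fun h => ?_)
  exact (Finset.mem_filter.1 hj).2.ne (hx h)

lemma vdm_nonneg {n : ℕ} (x : Fin n → ℝ) : 0 ≤ vdm x :=
  Finset.prod_nonneg fun _ _ => Finset.prod_nonneg fun _ _ => abs_nonneg _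

lemma prod_abs_node {n : ℕ} (x : Fin n → ℝ) : ∏ j, |node x j| = vdm x ^ 2 := by
  have h1 : ∀ j, |node x j| = (∏ k ∈ univ.filter (fun k => j < k), |x j - x k|) *
      ∏ k ∈ univ.filter (fun k => k < j), |x k - x j| := by
    intro j
    have : univ.erase j = univ.filter (fun k => j < k) ∪ univ.filter (fun k => k < j) := by
      ext k
      simp only [mem_erase, mem_univ, and_true, mem_union, mem_filter, true_and]
      constructor
      · intro h; exact (lt_or_gt_of_ne h).symm
      · rintro (h | h)
        · exact h.ne'
        · exact h.ne
    rw [node, this, Finset.prod_union, abs_mul, Finset.abs_prod, Finset.abs_prod]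
    · congr 1
      exact Finset.prod_congr rfl fun k _ => abs_sub_comm _ _
    · rw [Finset.disjoint_filter]
      intro k _ h; exact h.not_gt
  rw [Finset.prod_congr rfl fun j _ => h1 j, Finset.prod_mul_distrib, sq]
  congr 1
  rw [vdm]
  exact Finset.prod_comm' (by simp)

lemma abs_det_vandermonde {n : ℕ} (x : Fin n → ℝ) : |(Matrix.vandermonde x).det| = vdm x := by
  rw [Matrix.det_vandermonde, Finset.abs_prod, vdm]
  refine Finset.prod_congr rfl fun i _ => ?_
  rw [Finset.abs_prod]
  refine Finset.prod_congr (by ext; simp) fun k _ => abs_sub_comm _ _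

/-- Column `j` holds the coefficients of `∏_{k ≠ j} (X − x_k)`. -/
noncomputable def coeffMat {n : ℕ} (x : Fin n → ℝ) : Matrix (Fin n) (Fin n) ℝ :=
  Matrix.of fun k j => (Lagrange.nodal (univ.erase j) x).coeff k

lemma eval_eq_sum_fin {n : ℕ} {p : Polynomial ℝ} (hp : p.natDegree < n) (y : ℝ) :
    p.eval y = ∑ k : Fin n, y ^ (k : ℕ) * p.coeff k := by
  rw [Polynomial.eval_eq_sum_range' hp, Finset.sum_range]
  exact Finset.sum_congr rfl fun _ _ => mul_comm _ _

lemma natDegree_nodal_erase_lt {n : ℕ} (x : Fin n → ℝ) (j : Fin n) :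
    (Lagrange.nodal (univ.erase j) x).natDegree < n := by
  rw [Lagrange.natDegree_nodal, Finset.card_erase_of_mem (mem_univ _), Finset.card_fin]
  have := j.2
  omega

/-- Evaluating the columns of `coeffMat x` at the points `x` gives `diag(node x)`. -/
lemma abs_det_coeffMat {n : ℕ} {x : Fin n → ℝ} (hx : Function.Injective x) :
    |(coeffMat x).det| = vdm x := by
  have h : Matrix.vandermonde x * coeffMat x = Matrix.diagonal (node x) := by
    ext i j
    rw [Matrix.mul_apply]
    simp only [Matrix.vandermonde_apply, coeffMat, Matrix.of_apply]
    rw [← eval_eq_sum_fin (natDegree_nodal_erase_lt x j), Lagrange.eval_nodal,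
      Matrix.diagonal_apply]
    split_ifs with hij
    · subst hij; rfl
    · exact Finset.prod_eq_zero (Finset.mem_erase.2 ⟨hij, mem_univ _⟩) (sub_self _)
  have h2 := congrArg (fun M => |Matrix.det M|) h
  simp only [Matrix.det_mul, abs_mul, abs_det_vandermonde, Matrix.det_diagonal,
    Finset.abs_prod, prod_abs_node] at h2
  have := vdm_pos hx
  rw [sq] at h2
  exact mul_left_cancel₀ this.ne' h2

/-- The Jacobian matrix of `u ↦ (h, q)` has determinant `±Δ(u)/Δ(l)`: it factors as a row-scaled
Vandermonde matrix of `l`, bordered by a coordinate row, times `coeffMat u`. -/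
lemma abs_det_borderMat {n : ℕ} {l : Fin n → ℝ} (hl : Function.Injective l)
    {u : Fin (n + 1) → ℝ} (hu : Function.Injective u) :
    |(Matrix.of (Fin.cons (fun _ => 1) fun i j =>
      (Lagrange.nodal (univ.erase j) u).eval (l i) / node l i) :
        Matrix (Fin (n + 1)) (Fin (n + 1)) ℝ).det| = vdm u / vdm l := by
  set B : Matrix (Fin (n + 1)) (Fin (n + 1)) ℝ :=
    Matrix.of (Fin.cons (Pi.single (Fin.last n) 1) fun i k => (node l i)⁻¹ * l i ^ (k : ℕ)) with hB
  have h : (Matrix.of (Fin.cons (fun _ => 1) fun i j =>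
      (Lagrange.nodal (univ.erase j) u).eval (l i) / node l i) :
        Matrix (Fin (n + 1)) (Fin (n + 1)) ℝ) = B * coeffMat u := by
    ext i j
    rw [Matrix.mul_apply]
    refine Fin.cases ?_ (fun i => ?_) i
    · simp only [hB, Matrix.of_apply, Fin.cons_zero, coeffMat, Pi.single_apply, ite_mul, one_mul,
        zero_mul, Finset.sum_ite_eq', mem_univ, if_true, Fin.val_last]
      have h1 := (Lagrange.nodal_monic (s := univ.erase j) (v := u)).coeff_natDegree
      rw [Lagrange.natDegree_nodal, Finset.card_erase_of_mem (mem_univ _), Finset.card_fin] at h1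
      exact h1.symm
    · simp only [hB, Matrix.of_apply, Fin.cons_succ, coeffMat, mul_assoc]
      rw [← Finset.mul_sum, ← eval_eq_sum_fin (natDegree_nodal_erase_lt u j), div_eq_inv_mul]
  have hBdet : |B.det| = (vdm l)⁻¹ := by
    rw [Matrix.det_succ_row_zero, Finset.sum_eq_single (Fin.last n)]
    · have : B.submatrix Fin.succ (Fin.last n).succAbove =
          Matrix.of fun i j => (node l i)⁻¹ * Matrix.vandermonde l i j := by
        ext i j
        simp [hB, Matrix.vandermonde_apply]
      rw [this, Matrix.det_mul_column, abs_mul, abs_mul, abs_mul, abs_det_vandermonde,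
        Finset.abs_prod]
      simp only [abs_inv, Finset.prod_inv_distrib, prod_abs_node]
      have := (vdm_pos hl).ne'
      simp [hB]
      field_simp
    · intro j _ hj
      simp [hB, hj]
    · simp
  rw [h, Matrix.det_mul, abs_mul, hBdet, abs_det_coeffMat hu, div_eq_inv_mul]

/-- The Jacobian matrix of `(r, l) ↦ w` has determinant `±r^n Δ(l)/Δ(u)`: it factors as a
row-scaled Vandermonde matrix of `u` times the matrix of coefficients of the polynomials involved,
whose leading coefficients vanish outside the first column. -/
lemma abs_det_residueMat {n : ℕ} {l : Fin n → ℝ} (hl : Function.Injective l)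
    {u : Fin (n + 1) → ℝ} (hu : Function.Injective u) (r : ℝ) :
    |(Matrix.of fun j => Fin.cons ((Lagrange.nodal univ l).eval (u j) / node u j) fun i =>
      -(r * (Lagrange.nodal (univ.erase i) l).eval (u j) / node u j) :
        Matrix (Fin (n + 1)) (Fin (n + 1)) ℝ).det| = |r| ^ n * vdm l / vdm u := by
  set C : Matrix (Fin (n + 1)) (Fin (n + 1)) ℝ :=
    Matrix.of fun k => Fin.cons ((Lagrange.nodal univ l).coeff k) fun i =>
      -(r * (Lagrange.nodal (univ.erase i) l).coeff k) with hC
  have h : (Matrix.of fun j => Fin.cons ((Lagrange.nodal univ l).eval (u j) / node u j) fun i =>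
      -(r * (Lagrange.nodal (univ.erase i) l).eval (u j) / node u j) :
        Matrix (Fin (n + 1)) (Fin (n + 1)) ℝ) =
      Matrix.of fun j i => (node u j)⁻¹ * (Matrix.vandermonde u * C) j i := by
    ext j i
    rw [Matrix.of_apply, Matrix.of_apply, Matrix.mul_apply]
    refine Fin.cases ?_ (fun i => ?_) i
    · simp only [hC, Matrix.of_apply, Fin.cons_zero, Matrix.vandermonde_apply]
      rw [← eval_eq_sum_fin, div_eq_inv_mul]
      rw [Lagrange.natDegree_nodal, Finset.card_fin]; omega
    · simp only [hC, Matrix.of_apply, Fin.cons_succ, Matrix.vandermonde_apply]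
      rw [eval_eq_sum_fin ((natDegree_nodal_erase_lt l i).trans (Nat.lt_succ_self n)),
        div_eq_inv_mul, ← mul_neg, Finset.mul_sum, ← Finset.sum_neg_distrib]
      congr 1
      exact Finset.sum_congr rfl fun _ _ => by ring
  have hCdet : |C.det| = |r| ^ n * vdm l := by
    rw [Matrix.det_succ_row C (Fin.last n), Finset.sum_eq_single 0]
    · have : C.submatrix (Fin.last n).succAbove (Fin.succAbove 0) = (-r) • coeffMat l := by
        ext i j
        simp [hC, coeffMat]
      have h1 : C (Fin.last n) 0 = 1 := by
        have h1 := (Lagrange.nodal_monic (s := univ) (v := l)).coeff_natDegree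
        rw [Lagrange.natDegree_nodal, Finset.card_fin] at h1
        simpa [hC] using h1
      rw [this, h1, Matrix.det_smul, abs_mul, abs_mul, abs_mul, abs_det_coeffMat hl]
      simp
    · intro i _ hi
      obtain ⟨i, rfl⟩ := Fin.exists_succ_eq.2 hi
      have : C (Fin.last n) i.succ = 0 := by
        simp only [hC, Matrix.of_apply, Fin.cons_succ, Fin.val_last]
        rw [Polynomial.coeff_eq_zero_of_natDegree_lt (natDegree_nodal_erase_lt l i)]
        simp
      simp [this]
    · simp
  rw [h, Matrix.det_mul_column, Matrix.det_mul, abs_mul, abs_mul, hCdet, abs_det_vandermonde,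
    Finset.abs_prod]
  simp only [abs_inv, Finset.prod_inv_distrib, prod_abs_node]
  have := (vdm_pos hu).ne'
  field_simp

/-! ### Interlacing and signs -/

/-- `u_0 < l_0 < u_1 < l_1 < ⋯ < l_{n-1} < u_n`. -/
def Interlace {n : ℕ} (l : Fin n → ℝ) (u : Fin (n + 1) → ℝ) : Prop :=
  ∀ i : Fin n, u i.castSucc < l i ∧ l i < u i.succ

namespace Interlace

variable {n : ℕ} {l : Fin n → ℝ} {u : Fin (n + 1) → ℝ}

lemma strictMono_right (h : Interlace l u) : StrictMono u :=
  Fin.strictMono_iff_lt_succ.2 fun i => (h i).1.trans (h i).2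

lemma strictMono_left (h : Interlace l u) : StrictMono l := by
  cases n with
  | zero => exact fun i => i.elim0
  | succ n =>
    refine Fin.strictMono_iff_lt_succ.2 fun i => ?_
    have h1 := (h i.castSucc).2
    have h2 := (h i.succ).1
    rw [Fin.succ_castSucc] at h1
    exact h1.trans h2

lemma lt_iff (h : Interlace l u) (i : Fin n) (j : Fin (n + 1)) : l i < u j ↔ i.castSucc < j := by
  constructor
  · intro hlt
    by_contra! hj
    exact lt_asymm hlt ((h.strictMono_right.monotone hj).trans_lt (h i).1)
  · intro hj
    exact (h i).2.trans_le (h.strictMono_right.monotone (Fin.castSucc_lt_iff_succ_le.1 hj))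

lemma ne (h : Interlace l u) (i : Fin n) (j : Fin (n + 1)) : l i ≠ u j := by
  rcases lt_or_ge i.castSucc j with hj | hj
  · exact ((h.lt_iff i j).2 hj).ne
  · exact ((h.strictMono_right.monotone hj).trans_lt (h i).1).ne'

end Interlace

lemma prod_sub_eq_sign {ι : Type*} (s : Finset ι) (x : ι → ℝ) (y : ℝ) :
    ∏ j ∈ s, (y - x j) = (-1) ^ (#(s.filter fun j => y < x j)) * |∏ j ∈ s, (y - x j)| := by
  rw [Finset.abs_prod, ← Finset.prod_const, Finset.prod_filter, ← Finset.prod_mul_distrib]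
  refine Finset.prod_congr rfl fun j _ => ?_
  split_ifs with h
  · rw [abs_of_neg (sub_neg.2 h)]; ring
  · rw [abs_of_nonneg (sub_nonneg.2 (not_lt.1 h))]; ring

lemma node_eq_sign {n : ℕ} {x : Fin n → ℝ} (hx : StrictMono x) (i : Fin n) :
    node x i = (-1) ^ (#(Finset.Ioi i)) * |node x i| := by
  have h := prod_sub_eq_sign (univ.erase i) x (x i)
  have : (univ.erase i).filter (fun j => x i < x j) = Finset.Ioi i := by
    ext j
    simp only [mem_filter, mem_erase, mem_univ, and_true, hx.lt_iff_lt, Finset.mem_Ioi]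
    exact ⟨fun h => h.2, fun h => ⟨h.ne', h⟩⟩
  rw [this] at h
  exact h

/-- The border entries `q_i` are positive. -/
lemma Interlace.prod_left {n : ℕ} {l : Fin n → ℝ} {u : Fin (n + 1) → ℝ} (h : Interlace l u)
    (i : Fin n) :
    -(∏ j, (l i - u j)) / node l i = (∏ j, |l i - u j|) / |node l i| := by
  have h1 := prod_sub_eq_sign univ u (l i)
  have h2 := node_eq_sign h.strictMono_left i
  have h3 : #(univ.filter fun j => l i < u j) = #(Finset.Ioi i) + 1 := by
    have : (univ.filter fun j => l i < u j) = Finset.Ioi i.castSucc := by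
      ext j; simp [h.lt_iff]
    rw [this, Fin.card_Ioi, Fin.card_Ioi, Fin.val_castSucc]
    have := i.2
    omega
  have h4 := abs_pos.2 (node_ne_zero h.strictMono_left.injective i)
  rw [h1, h2, h3, Finset.abs_prod, abs_mul, abs_pow, abs_neg, abs_one, one_pow, one_mul, abs_abs,
    pow_succ]
  have h5 : ((-1 : ℝ) ^ #(Finset.Ioi i)) ≠ 0 := by positivity
  field_simp

/-- The residues `w_j` are positive, for `r = 1`. -/
lemma Interlace.prod_right {n : ℕ} {l : Fin n → ℝ} {u : Fin (n + 1) → ℝ} (h : Interlace l u)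
    (j : Fin (n + 1)) :
    (∏ i, (u j - l i)) / node u j = (∏ i, |l i - u j|) / |node u j| := by
  have h1 := prod_sub_eq_sign univ l (u j)
  have h2 := node_eq_sign h.strictMono_right j
  have h3 : #(univ.filter fun i => u j < l i) = #(Finset.Ioi j) := by
    rw [← Finset.card_map (Fin.succEmb n)]
    congr 1
    ext k
    simp only [mem_map, mem_filter, mem_univ, true_and, Finset.mem_Ioi, Fin.coe_succEmb]
    have key : ∀ i : Fin n, u j < l i ↔ j < i.succ := fun i => by
      rw [← not_le, (h.ne i j).le_iff_lt, h.lt_iff, Fin.castSucc_lt_iff_succ_le, not_le]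
    constructor
    · rintro ⟨i, hi, rfl⟩
      exact (key i).1 hi
    · intro hk
      obtain ⟨i, rfl⟩ := Fin.exists_succ_eq.2 (Fin.ne_zero_of_lt hk)
      exact ⟨i, (key i).2 hk, rfl⟩
  have h4 := abs_pos.2 (node_ne_zero h.strictMono_right.injective j)
  rw [h1, h2, h3, Finset.abs_prod, abs_mul, abs_pow, abs_neg, abs_one, one_pow, one_mul, abs_abs]
  have h5 : ((-1 : ℝ) ^ #(Finset.Ioi j)) ≠ 0 := by positivity
  have h6 : ∏ i, |u j - l i| = ∏ i, |l i - u j| := Finset.prod_congr rfl fun _ _ => abs_sub_comm _ _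
  rw [h6]
  field_simp

section Algebra

open Polynomial

/-- A monic polynomial of degree `n` that changes sign between consecutive points of
`u_0 < ⋯ < u_n` is split, with one root in each gap. -/
lemma exists_interlace {n : ℕ} {P : ℝ[X]} (hP : P.Monic) (hdeg : P.natDegree = n)
    {u : Fin (n + 1) → ℝ} (hu : StrictMono u)
    (hs : ∀ i : Fin n, P.eval (u i.castSucc) * P.eval (u i.succ) < 0) :
    ∃ l : Fin n → ℝ, Interlace l u ∧ P = Lagrange.nodal univ l := by
  have key : ∀ i : Fin n, ∃ y, (u i.castSucc < y ∧ y < u i.succ) ∧ P.eval y = 0 := by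
    intro i
    have hlt : u i.castSucc < u i.succ := hu i.castSucc_lt_succ
    have hc : ContinuousOn (fun x => P.eval x) (Set.Icc (u i.castSucc) (u i.succ)) :=
      P.continuous.continuousOn
    rcases mul_neg_iff.1 (hs i) with ⟨h1, h2⟩ | ⟨h1, h2⟩
    · obtain ⟨y, hy, hy0⟩ := intermediate_value_Ioo' hlt.le hc ⟨h2, h1⟩
      exact ⟨y, hy, hy0⟩
    · obtain ⟨y, hy, hy0⟩ := intermediate_value_Ioo hlt.le hc ⟨h1, h2⟩
      exact ⟨y, hy, hy0⟩
  choose l hl hl0 using key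
  have hI : Interlace l u := hl
  refine ⟨l, hI, ?_⟩
  refine Polynomial.eq_of_degree_sub_lt_of_eval_index_eq univ (v := l)
    hI.strictMono_left.injective.injOn ?_ fun i hi => ?_
  · have hd : P.degree = n := by rw [degree_eq_natDegree hP.ne_zero, hdeg]
    have := degree_sub_lt_left (p := P) (q := Lagrange.nodal univ l)
      (by rw [hd, Lagrange.degree_nodal, Finset.card_fin]) hP.ne_zero
      (by rw [hP.leadingCoeff, Lagrange.nodal_monic.leadingCoeff])
    rw [Finset.card_fin]
    rwa [hd] at this
  · rw [hl0, Lagrange.eval_nodal_at_node hi]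

lemma nodal_inj {n : ℕ} {x y : Fin n → ℝ} (hx : StrictMono x) (hy : StrictMono y)
    (h : Lagrange.nodal univ x = Lagrange.nodal univ y) : x = y := by
  refine (hx.range_inj hy).1 ?_
  have key : ∀ (z : Fin n → ℝ) (t : ℝ), t ∈ Set.range z ↔ (Lagrange.nodal univ z).eval t = 0 := by
    intro z t
    rw [Lagrange.eval_nodal, Finset.prod_eq_zero_iff]
    simp only [Set.mem_range, mem_univ, true_and, sub_eq_zero, eq_comm]
  ext t
  rw [key, key, h]

lemma nodal_coeff_card {ι : Type*} (s : Finset ι) (x : ι → ℝ) :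
    (Lagrange.nodal s x).coeff #s = 1 := by
  have h := (Lagrange.nodal_monic (s := s) (v := x)).coeff_natDegree
  rwa [Lagrange.natDegree_nodal] at h

lemma nodal_coeff_erase {n : ℕ} (x : Fin (n + 1) → ℝ) (j : Fin (n + 1)) :
    (Lagrange.nodal (univ.erase j) x).coeff n = 1 := by
  have h := nodal_coeff_card (univ.erase j) x
  rwa [Finset.card_erase_of_mem (mem_univ _), Finset.card_fin] at h

/-- The subleading coefficient of `∏ (X − x_j)`; multiplying by `X` avoids the index `#s - 1`. -/
lemma X_mul_nodal_coeff {ι : Type*} (s : Finset ι) (x : ι → ℝ) :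
    (X * Lagrange.nodal s x).coeff #s = -∑ j ∈ s, x j := by
  classical
  induction s using Finset.induction_on with
  | empty => simp
  | insert a s ha ih =>
    rw [Lagrange.nodal_insert_eq_nodal ha, Finset.card_insert_of_notMem ha, coeff_X_mul, sub_mul,
      coeff_sub, coeff_C_mul, ih, nodal_coeff_card, Finset.sum_insert ha]
    ring

/-- The second subleading coefficient of `∏ (X − x_j)`, which is `(p₁² − p₂) / 2` in terms of power
sums. -/
lemma X_sq_mul_nodal_coeff {ι : Type*} (s : Finset ι) (x : ι → ℝ) :
    (X ^ 2 * Lagrange.nodal s x).coeff #s = ((∑ j ∈ s, x j) ^ 2 - ∑ j ∈ s, x j ^ 2) / 2 := by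
  classical
  induction s using Finset.induction_on with
  | empty => simp
  | insert a s ha ih =>
    have : X ^ 2 * ((X - C (x a)) * Lagrange.nodal s x) =
      X * (X ^ 2 * Lagrange.nodal s x - C (x a) * (X * Lagrange.nodal s x)) := by ring
    rw [Lagrange.nodal_insert_eq_nodal ha, Finset.card_insert_of_notMem ha, this, coeff_X_mul,
      coeff_sub, coeff_C_mul, ih, X_mul_nodal_coeff, Finset.sum_insert ha, Finset.sum_insert ha]
    ring

lemma eval_nodal_erase {n : ℕ} (x : Fin n → ℝ) (i j : Fin n) :
    (Lagrange.nodal (univ.erase j) x).eval (x i) = if i = j then node x i else 0 := by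
  rw [Lagrange.eval_nodal]
  split_ifs with hij
  · subst hij; rfl
  · exact Finset.prod_eq_zero (Finset.mem_erase.2 ⟨hij, mem_univ _⟩) (sub_self _)

/-! ### Bordering: nodes `l`, roots `u` -/

/-- `(h, q) = (∑ u − ∑ l, (−∏_j (l_i − u_j) / ∏_{k≠i} (l_i − l_k))_i)`: the corner entry and the
squared border entries of the bordered matrix with spectrum `u` and principal minor `diag(l)`. -/
noncomputable def qmap {n : ℕ} (l : Fin n → ℝ) (u : Fin (n + 1) → ℝ) : Fin (n + 1) → ℝ :=
  Fin.cons (∑ j, u j - ∑ i, l i) fun i => -(∏ j, (l i - u j)) / node l i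

/-- The characteristic polynomial of the bordered matrix with corner entry `v_0` and squared border
entries `v_1, …, v_n`. -/
noncomputable def bord {n : ℕ} (l : Fin n → ℝ) (v : Fin (n + 1) → ℝ) : ℝ[X] :=
  (X - C (v 0)) * Lagrange.nodal univ l - ∑ i, C (v i.succ) * Lagrange.nodal (univ.erase i) l

section bord

variable {n : ℕ} (l : Fin n → ℝ) (v : Fin (n + 1) → ℝ)

lemma bord_sum_coeff {k : ℕ} (hk : n ≤ k) :
    (∑ i, C (v i.succ) * Lagrange.nodal (univ.erase i) l).coeff k = 0 := by
  rw [finsetSum_coeff]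
  refine Finset.sum_eq_zero fun i _ => ?_
  rw [coeff_C_mul, coeff_eq_zero_of_natDegree_lt ((natDegree_nodal_erase_lt l i).trans_le hk),
    mul_zero]

lemma bord_coeff_top : (bord l v).coeff (n + 1) = 1 := by
  have h := nodal_coeff_card univ l
  rw [Finset.card_fin] at h
  rw [bord, coeff_sub, bord_sum_coeff l v (Nat.le_succ n), sub_mul, coeff_sub, coeff_X_mul,
    coeff_C_mul, h, coeff_eq_zero_of_natDegree_lt (n := n + 1)]
  · simp
  · rw [Lagrange.natDegree_nodal, Finset.card_fin]; omega

lemma bord_coeff_next : (bord l v).coeff n = -∑ i, l i - v 0 := by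
  have h := nodal_coeff_card univ l
  have h2 := X_mul_nodal_coeff univ l
  rw [Finset.card_fin] at h h2
  rw [bord, coeff_sub, bord_sum_coeff l v le_rfl, sub_mul, coeff_sub, coeff_C_mul, h, h2]
  ring

lemma bord_coeff_high {k : ℕ} (hk : n + 1 < k) : (bord l v).coeff k = 0 := by
  rw [bord, coeff_sub, bord_sum_coeff l v (by omega), coeff_eq_zero_of_natDegree_lt, sub_zero]
  rw [natDegree_mul (X_sub_C_ne_zero _) Lagrange.nodal_ne_zero, natDegree_X_sub_C,
    Lagrange.natDegree_nodal, Finset.card_fin]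
  omega

lemma bord_natDegree : (bord l v).natDegree = n + 1 := by
  refine natDegree_eq_of_le_of_coeff_ne_zero ?_ (by rw [bord_coeff_top]; exact one_ne_zero)
  exact natDegree_le_iff_coeff_eq_zero.2 fun k hk => bord_coeff_high l v hk

lemma bord_monic : (bord l v).Monic := by
  rw [Monic, leadingCoeff, bord_natDegree, bord_coeff_top]

lemma bord_eval (i : Fin n) : (bord l v).eval (l i) = -(v i.succ * node l i) := by
  rw [bord, eval_sub, eval_mul, Lagrange.eval_nodal_at_node (mem_univ i), mul_zero, zero_sub,
    eval_finsetSum]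
  congr 1
  simp only [eval_mul, eval_C, eval_nodal_erase]
  simp

end bord

/-- The difference of the two sides has degree less than `n` and vanishes at the `n` points `l`. -/
lemma nodal_eq_bord {n : ℕ} {l : Fin n → ℝ} (hl : Function.Injective l) (u : Fin (n + 1) → ℝ) :
    Lagrange.nodal univ u = bord l (qmap l u) := by
  refine Polynomial.eq_of_degree_sub_lt_of_eval_index_eq univ (v := l) hl.injOn ?_
    fun i hi => ?_
  · rw [Finset.card_fin, degree_lt_iff_coeff_zero]
    intro m hm
    have h1 := nodal_coeff_card univ u
    have h2 := X_mul_nodal_coeff univ u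
    rw [Finset.card_fin] at h1 h2
    rw [coeff_X_mul] at h2
    rw [coeff_sub]
    rcases hm.eq_or_lt with rfl | hm
    · rw [bord_coeff_next, h2, qmap, Fin.cons_zero]; ring
    rcases (Nat.succ_le_of_lt hm).eq_or_lt with rfl | hm
    · rw [bord_coeff_top, h1, sub_self]
    · rw [bord_coeff_high l _ hm, coeff_eq_zero_of_natDegree_lt, sub_zero]
      rw [Lagrange.natDegree_nodal, Finset.card_fin]; exact hm
  · rw [bord_eval, qmap, Fin.cons_succ, Lagrange.eval_nodal]
    have := node_ne_zero hl i
    field_simp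

lemma qmap_eq_of_nodal_eq {n : ℕ} {l : Fin n → ℝ} (hl : Function.Injective l)
    {u v : Fin (n + 1) → ℝ} (h : Lagrange.nodal univ u = bord l v) : qmap l u = v := by
  ext k
  refine Fin.cases ?_ (fun i => ?_) k
  · have h1 := congrArg (fun p => coeff p n) h
    have h2 := X_mul_nodal_coeff univ u
    rw [Finset.card_fin, coeff_X_mul] at h2
    simp only [bord_coeff_next, h2] at h1
    rw [qmap, Fin.cons_zero]
    linarith
  · have h1 := congrArg (fun p => eval (l i) p) h
    simp only [bord_eval, Lagrange.eval_nodal] at h1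
    rw [qmap, Fin.cons_succ, h1]
    have := node_ne_zero hl i
    field_simp

/-- The trace of the square of the bordered matrix: `∑ u² = ∑ l² + h² + 2 ∑ q`. -/
lemma sum_sq_eq {n : ℕ} {l : Fin n → ℝ} (hl : Function.Injective l) (u : Fin (n + 1) → ℝ) :
    ∑ j, u j ^ 2 = ∑ i, l i ^ 2 + qmap l u 0 ^ 2 + 2 * ∑ i : Fin n, qmap l u i.succ := by
  have h := congrArg (fun p => (X ^ 2 * p).coeff (n + 1)) (nodal_eq_bord hl u)
  have h2 := X_sq_mul_nodal_coeff univ u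
  have h3 := X_sq_mul_nodal_coeff univ l
  have h4 := X_mul_nodal_coeff univ l
  have h0 : qmap l u 0 = ∑ j, u j - ∑ i, l i := rfl
  rw [Finset.card_fin] at h2 h3 h4
  have h5 : ∀ i : Fin n, (X ^ 2 * Lagrange.nodal (univ.erase i) l).coeff (n + 1) = 1 := by
    intro i
    cases n with
    | zero => exact i.elim0
    | succ n => rw [coeff_X_pow_mul, nodal_coeff_erase]
  have h6 : X ^ 2 * bord l (qmap l u) = X * (X ^ 2 * Lagrange.nodal univ l) -
      C (qmap l u 0) * (X * (X * Lagrange.nodal univ l)) -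
      ∑ i : Fin n, C (qmap l u i.succ) * (X ^ 2 * Lagrange.nodal (univ.erase i) l) := by
    rw [bord, mul_sub, Finset.mul_sum]
    congr 1
    · ring
    · exact Finset.sum_congr rfl fun _ _ => by ring
  simp only [h2, h6, coeff_sub, coeff_C_mul, coeff_X_mul, h3, finsetSum_coeff, h5, mul_one,
    h4] at h
  rw [h0] at h ⊢
  linear_combination (-2) * h

lemma qmap_injOn {n : ℕ} (l : Fin n → ℝ) : Set.InjOn (qmap l) {u | Interlace l u} := by
  intro u hu u' hu' h
  have hl := (show Interlace l u from hu).strictMono_left.injective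
  refine nodal_inj (Interlace.strictMono_right hu) (Interlace.strictMono_right hu') ?_
  rw [nodal_eq_bord hl, h, ← nodal_eq_bord hl]

lemma qmap_succ {n : ℕ} {l : Fin n → ℝ} {u : Fin (n + 1) → ℝ} (h : Interlace l u) (i : Fin n) :
    qmap l u i.succ = (∏ j, |l i - u j|) / |node l i| := h.prod_left i

lemma exists_large {P : ℝ[X]} (hP : P.Monic) (hd : 0 < P.natDegree) (b : ℝ) :
    ∃ R, b < R ∧ 0 < P.eval R := by
  have h := P.tendsto_atTop_of_leadingCoeff_nonneg (natDegree_pos_iff_degree_pos.1 hd)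
    (by rw [hP.leadingCoeff]; exact zero_le_one)
  obtain ⟨R, h1, h2⟩ := ((h.eventually_gt_atTop 0).and (Filter.eventually_gt_atTop b)).exists
  exact ⟨R, h2, h1⟩

lemma exists_small {P : ℝ[X]} (hP : P.Monic) (hd : 0 < P.natDegree) (b : ℝ) :
    ∃ R, R < b ∧ 0 < (-1) ^ P.natDegree * P.eval R := by
  have hX : (-X : ℝ[X]).natDegree = 1 := by rw [natDegree_neg, natDegree_X]
  have hm : (C ((-1) ^ P.natDegree) * P.comp (-X)).Monic := by
    rw [Monic, leadingCoeff_mul, leadingCoeff_comp (by rw [hX]; exact one_ne_zero),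
      hP.leadingCoeff, leadingCoeff_C, leadingCoeff_neg, leadingCoeff_X, one_mul, ← mul_pow]
    norm_num
  obtain ⟨R, h1, h2⟩ := exists_large hm (by
    rw [natDegree_C_mul (by positivity), natDegree_comp, hX, mul_one]; exact hd) (-b)
  refine ⟨-R, by linarith, ?_⟩
  simpa using h2

/-- Surjectivity comes from the intermediate value theorem: for positive border entries the
characteristic polynomial alternates in sign along `-∞, l_0, …, l_{n-1}, ∞`. -/
lemma qmap_image {n : ℕ} {l : Fin n → ℝ} (hl : StrictMono l) :
    qmap l '' {u | Interlace l u} = {v | ∀ i : Fin n, 0 < v i.succ} := by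
  ext v
  constructor
  · rintro ⟨u, hu, rfl⟩ i
    have hu : Interlace l u := hu
    rw [qmap_succ hu]
    exact div_pos (Finset.prod_pos fun j _ => abs_pos.2 (sub_ne_zero.2 (hu.ne i j)))
      (abs_pos.2 (node_ne_zero hl.injective i))
  · intro hv
    have hv : ∀ i : Fin n, 0 < v i.succ := hv
    have hm := bord_monic l v
    have hd := bord_natDegree l v
    obtain ⟨b, hb⟩ : ∃ b, ∀ i, |l i| < b := by
      refine ⟨∑ i, |l i| + 1, fun i => ?_⟩
      have := Finset.single_le_sum (f := fun i => |l i|) (fun i _ => abs_nonneg _) (mem_univ i)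
      linarith
    obtain ⟨R, hR, hR0⟩ := exists_large hm (by omega) (max b 0)
    obtain ⟨R', hR', hR0'⟩ := exists_small hm (by omega) (min (-b) 0)
    -- The nodes together with one point on either side, where the sign is the one at infinity.
    set a : Fin (n + 2) → ℝ := Fin.cons R' (Fin.snoc (α := fun _ => ℝ) l R) with ha
    have ha0 : a 0 = R' := rfl
    have hal : ∀ i : Fin n, a i.castSucc.succ = l i := fun i => by simp [ha]
    have haR : a (Fin.last n).succ = R := by simp [ha]
    have hRl : ∀ i, l i < R := fun i =>
      (le_abs_self _).trans_lt ((hb i).trans ((le_max_left _ _).trans_lt hR))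
    have hlR' : ∀ i, R' < l i := fun i => by
      have := neg_abs_le (l i)
      have := hb i
      have := hR'.trans_le (min_le_left _ _)
      linarith
    have hRR' : R' < R :=
      (hR'.trans_le (min_le_right _ _)).trans ((le_max_right _ _).trans_lt hR)
    have hmono : StrictMono a := by
      have hs : StrictMono (Fin.snoc (α := fun _ => ℝ) l R : Fin (n + 1) → ℝ) := by
        intro i j hij
        induction j using Fin.lastCases with
        | last =>
          obtain ⟨i, rfl⟩ := Fin.exists_castSucc_eq.2 hij.ne
          simpa using hRl i
        | cast j =>
          obtain ⟨i, rfl⟩ := Fin.exists_castSucc_eq.2 (hij.trans (Fin.castSucc_lt_last j)).ne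
          simpa using hl (Fin.castSucc_lt_castSucc_iff.1 hij)
      intro i j hij
      obtain ⟨j, rfl⟩ := Fin.exists_succ_eq.2 (Fin.ne_zero_of_lt hij)
      induction i using Fin.cases with
      | zero =>
        induction j using Fin.lastCases with
        | last => rw [ha0, haR]; exact hRR'
        | cast j => rw [ha0, hal]; exact hlR' j
      | succ i => simpa [ha] using hs (Fin.succ_lt_succ_iff.1 hij)
    have hsign : ∀ k : Fin (n + 2), 0 < (-1 : ℝ) ^ (n + 1 - (k : ℕ)) * (bord l v).eval (a k) := by
      intro k
      induction k using Fin.cases with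
      | zero => rw [ha0]; rw [hd] at hR0'; simpa using hR0'
      | succ k =>
        induction k using Fin.lastCases with
        | last => rw [haR]; simpa using hR0
        | cast i =>
          rw [hal, bord_eval, node_eq_sign hl, Fin.card_Ioi]
          have h1 : n + 1 - (i.castSucc.succ : ℕ) = (n - 1 - i) + 1 := by
            simp only [Fin.val_succ, Fin.val_castSucc]; omega
          have h2 := mul_pos (hv i) (abs_pos.2 (node_ne_zero hl.injective i))
          have h3 : ((-1 : ℝ) ^ (n - 1 - (i : ℕ))) * (-1) ^ (n - 1 - (i : ℕ)) = 1 := by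
            rw [← mul_pow]; norm_num
          rw [h1, pow_succ]
          calc (0 : ℝ) < 1 * (v i.succ * |node l i|) := by linarith
            _ = (-1) ^ (n - 1 - (i : ℕ)) * (-1) ^ (n - 1 - (i : ℕ)) * (v i.succ * |node l i|) := by
              rw [h3]
            _ = _ := by ring
    obtain ⟨u, hu, hPu⟩ := exists_interlace hm hd hmono (by
      intro i
      have h1 := mul_pos (hsign i.castSucc) (hsign i.succ)
      have h2 : n + 1 - (i.castSucc : ℕ) = (n + 1 - (i.succ : ℕ)) + 1 := by
        simp only [Fin.val_succ, Fin.val_castSucc]; omega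
      have h3 : ((-1 : ℝ) ^ (n + 1 - (i.succ : ℕ))) * (-1) ^ (n + 1 - (i.succ : ℕ)) = 1 := by
        rw [← mul_pow]; norm_num
      rw [h2, pow_succ] at h1
      have h4 : 0 < -(((-1 : ℝ) ^ (n + 1 - (i.succ : ℕ))) * (-1) ^ (n + 1 - (i.succ : ℕ))) *
        ((bord l v).eval (a i.castSucc) * (bord l v).eval (a i.succ)) := by
        calc _ < _ := h1
          _ = _ := by ring
      rw [h3] at h4
      linarith)
    refine ⟨u, fun i => ⟨?_, ?_⟩, qmap_eq_of_nodal_eq hl.injective hPu.symm⟩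
    · have := (hu i.castSucc).2
      rwa [hal] at this
    · have := (hu i.succ).1
      rwa [← Fin.succ_castSucc, hal] at this

/-! ### Compression: nodes `u`, roots `l` -/

/-- For `v = (r, l)`, the residues of `r ∏_i (x − l_i) / ∏_j (x − u_j)`. -/
noncomputable def wmap {n : ℕ} (u : Fin (n + 1) → ℝ) (v : Fin (n + 1) → ℝ) : Fin (n + 1) → ℝ :=
  fun j => v 0 * (∏ i : Fin n, (u j - v i.succ)) / node u j

section wmap

variable {n : ℕ} {u : Fin (n + 1) → ℝ}

lemma residue_eval (u w : Fin (n + 1) → ℝ) (j : Fin (n + 1)) :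
    (∑ k, C (w k) * Lagrange.nodal (univ.erase k) u).eval (u j) = w j * node u j := by
  rw [eval_finsetSum]
  simp only [eval_mul, eval_C, eval_nodal_erase]
  simp

lemma residue_coeff (u w : Fin (n + 1) → ℝ) :
    (∑ k, C (w k) * Lagrange.nodal (univ.erase k) u).coeff n = ∑ k, w k := by
  simp [nodal_coeff_erase]

lemma residue_degree (u w : Fin (n + 1) → ℝ) :
    (∑ k, C (w k) * Lagrange.nodal (univ.erase k) u).degree < (n + 1 : ℕ) := by
  rw [degree_lt_iff_coeff_zero]
  intro m hm
  rw [finsetSum_coeff]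
  refine Finset.sum_eq_zero fun i _ => ?_
  rw [coeff_C_mul, coeff_eq_zero_of_natDegree_lt ((natDegree_nodal_erase_lt u i).trans_le hm),
    mul_zero]

/-- Lagrange interpolation at `u`. -/
lemma nodal_eq_residue (hu : Function.Injective u) (v : Fin (n + 1) → ℝ) :
    C (v 0) * Lagrange.nodal univ (fun i : Fin n => v i.succ) =
      ∑ k, C (wmap u v k) * Lagrange.nodal (univ.erase k) u := by
  refine Polynomial.eq_of_degrees_lt_of_eval_index_eq univ (v := u) hu.injOn ?_ ?_
    fun j _ => ?_
  · rw [Finset.card_fin, degree_lt_iff_coeff_zero]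
    intro m hm
    rw [coeff_C_mul, coeff_eq_zero_of_natDegree_lt, mul_zero]
    rw [Lagrange.natDegree_nodal, Finset.card_fin]; omega
  · rw [Finset.card_fin]; exact residue_degree _ _
  · rw [residue_eval, wmap, eval_mul, eval_C, Lagrange.eval_nodal]
    have := node_ne_zero hu j
    field_simp

lemma wmap_eq_of_nodal_eq (hu : Function.Injective u) {v w : Fin (n + 1) → ℝ}
    (h : C (v 0) * Lagrange.nodal univ (fun i : Fin n => v i.succ) =
      ∑ k, C (w k) * Lagrange.nodal (univ.erase k) u) : wmap u v = w := by
  ext j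
  have h1 := congrArg (fun p => eval (u j) p) h
  simp only [residue_eval, eval_mul, eval_C, Lagrange.eval_nodal] at h1
  rw [wmap, h1]
  have := node_ne_zero hu j
  field_simp

lemma sum_wmap (hu : Function.Injective u) (v : Fin (n + 1) → ℝ) : ∑ j, wmap u v j = v 0 := by
  have h := congrArg (fun p => coeff p n) (nodal_eq_residue hu v)
  have h1 := nodal_coeff_card univ (fun i : Fin n => v i.succ)
  rw [Finset.card_fin] at h1
  simp only [residue_coeff, coeff_C_mul, h1, mul_one] at h
  exact h.symm

/-- The domain of `wmap u`: `r > 0` and `l` interlacing with `u`. -/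
def wdom (u : Fin (n + 1) → ℝ) : Set (Fin (n + 1) → ℝ) :=
  {v | 0 < v 0 ∧ Interlace (fun i : Fin n => v i.succ) u}

lemma wmap_injOn (hu : Function.Injective u) : Set.InjOn (wmap u) (wdom u) := by
  rintro v ⟨hv0, hv⟩ v' ⟨hv0', hv'⟩ h
  have h0 : v 0 = v' 0 := by rw [← sum_wmap hu v, h, sum_wmap hu v']
  have h1 := nodal_eq_residue hu v
  rw [h, ← nodal_eq_residue hu v', h0] at h1
  have h2 := nodal_inj hv.strictMono_left hv'.strictMono_left
    (mul_left_cancel₀ (C_ne_zero.2 hv0'.ne') h1)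
  ext k
  refine Fin.cases h0 (fun i => congrFun h2 i) k

lemma wmap_apply {v : Fin (n + 1) → ℝ} (h : Interlace (fun i : Fin n => v i.succ) u)
    (j : Fin (n + 1)) :
    wmap u v j = v 0 * ((∏ i : Fin n, |v i.succ - u j|) / |node u j|) := by
  rw [wmap, mul_div_assoc, h.prod_right j]

/-- For positive `w`, the numerator of `∑ w_j / (x − u_j)` alternates in sign along `u`. -/
lemma wmap_image (hu : StrictMono u) : wmap u '' wdom u = {w | ∀ j, 0 < w j} := by
  ext w
  constructor
  · rintro ⟨v, ⟨hv0, hv⟩, rfl⟩ j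
    rw [wmap_apply hv]
    exact mul_pos hv0 (div_pos (Finset.prod_pos fun i _ => abs_pos.2 (sub_ne_zero.2 (hv.ne i j)))
      (abs_pos.2 (node_ne_zero hu.injective j)))
  · intro hw
    have hw : ∀ j, 0 < w j := hw
    set r := ∑ j, w j with hr
    have hr0 : 0 < r := Finset.sum_pos (fun j _ => hw j) ⟨0, mem_univ _⟩
    set Q : ℝ[X] := ∑ k, C (w k / r) * Lagrange.nodal (univ.erase k) u with hQ
    have hc : Q.coeff n = 1 := by
      rw [hQ, residue_coeff u fun k => w k / r, ← Finset.sum_div, ← hr, div_self hr0.ne']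
    have hd : Q.natDegree = n := by
      refine natDegree_eq_of_le_of_coeff_ne_zero ?_ (by rw [hc]; exact one_ne_zero)
      refine natDegree_le_iff_coeff_eq_zero.2 fun m hm => ?_
      exact (degree_lt_iff_coeff_zero _ _).1 (residue_degree u fun k => w k / r) m hm
    have hm : Q.Monic := by rw [Monic, leadingCoeff, hd, hc]
    obtain ⟨l, hl, hQl⟩ := exists_interlace hm hd hu (by
      intro i
      have hp : ∀ j, 0 < w j / r * |node u j| := fun j =>
        mul_pos (div_pos (hw j) hr0) (abs_pos.2 (node_ne_zero hu.injective j))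
      rw [hQ, residue_eval u fun k => w k / r, residue_eval u fun k => w k / r,
        node_eq_sign hu i.castSucc, node_eq_sign hu i.succ, Fin.card_Ioi, Fin.card_Ioi]
      have h2 : n + 1 - 1 - (i.castSucc : ℕ) = (n + 1 - 1 - (i.succ : ℕ)) + 1 := by
        simp only [Fin.val_succ, Fin.val_castSucc]; omega
      have h3 : ((-1 : ℝ) ^ (n + 1 - 1 - (i.succ : ℕ))) * (-1) ^ (n + 1 - 1 - (i.succ : ℕ)) = 1 := by
        rw [← mul_pow]; norm_num
      rw [h2, pow_succ]
      have h4 := mul_pos (hp i.castSucc) (hp i.succ)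
      calc _ = -(((-1 : ℝ) ^ (n + 1 - 1 - (i.succ : ℕ))) * (-1) ^ (n + 1 - 1 - (i.succ : ℕ)) *
            ((w i.castSucc / r * |node u i.castSucc|) * (w i.succ / r * |node u i.succ|))) := by ring
        _ < 0 := by rw [h3]; linarith)
    refine ⟨Fin.cons r l, ⟨?_, ?_⟩, wmap_eq_of_nodal_eq hu.injective ?_⟩
    · simpa using hr0
    · simpa using hl
    · simp only [Fin.cons_zero, Fin.cons_succ]
      rw [← hQl, hQ, Finset.mul_sum]
      refine Finset.sum_congr rfl fun k _ => ?_
      rw [← mul_assoc, ← C_mul, mul_div_cancel₀ _ hr0.ne']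

end wmap

end Algebra

/-! ### The changes of variables -/

/-- `∏_{i,j} |l_i − u_j|`. -/
noncomputable def cross {n : ℕ} (l : Fin n → ℝ) (u : Fin (n + 1) → ℝ) : ℝ :=
  ∏ i, ∏ j, |l i - u j|

lemma cross_pos {n : ℕ} {l : Fin n → ℝ} {u : Fin (n + 1) → ℝ} (h : Interlace l u) :
    0 < cross l u :=
  Finset.prod_pos fun i _ => Finset.prod_pos fun j _ => abs_pos.2 (sub_ne_zero.2 (h.ne i j))

/-- The linear map of a matrix, as a continuous linear map. -/
noncomputable def matCLM {n : ℕ} (M : Matrix (Fin n) (Fin n) ℝ) :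
    (Fin n → ℝ) →L[ℝ] (Fin n → ℝ) :=
  LinearMap.toContinuousLinearMap (Matrix.toLin' M)

lemma det_matCLM {n : ℕ} (M : Matrix (Fin n) (Fin n) ℝ) : (matCLM M).det = M.det := by
  rw [matCLM, LinearMap.det_toContinuousLinearMap, LinearMap.det_toLin']

lemma matCLM_apply {n : ℕ} (M : Matrix (Fin n) (Fin n) ℝ) (v : Fin n → ℝ) (i : Fin n) :
    matCLM M v i = ∑ j, M i j * v j := by
  simp [matCLM, Matrix.mulVec, dotProduct]

lemma hasFDerivAt_prod_sub {n m : ℕ} (y : ℝ) (e : Fin n → Fin m) (x : Fin m → ℝ) :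
    HasFDerivAt (fun x : Fin m → ℝ => ∏ k, (y - x (e k)))
      (∑ k, (∏ k' ∈ univ.erase k, (y - x (e k'))) •
        -(ContinuousLinearMap.proj (R := ℝ) (φ := fun _ : Fin m => ℝ) (e k))) x :=
  HasFDerivAt.finsetProd fun k _ => (hasFDerivAt_apply (e k) x).const_sub y

lemma hasFDerivAt_qmap {n : ℕ} (l : Fin n → ℝ) (u : Fin (n + 1) → ℝ) :
    HasFDerivAt (qmap l) (matCLM (Matrix.of (Fin.cons (fun _ => 1) fun i j =>
      (Lagrange.nodal (univ.erase j) u).eval (l i) / node l i))) u := by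
  rw [hasFDerivAt_pi']
  intro k
  refine Fin.cases ?_ (fun i => ?_) k
  · have h : HasFDerivAt (fun u : Fin (n + 1) → ℝ => ∑ j, u j - ∑ i, l i) _ u :=
      (HasFDerivAt.fun_sum fun j (_ : j ∈ univ) => hasFDerivAt_apply (𝕜 := ℝ) (F' := fun _ => ℝ) j u).sub_const _
    refine h.congr_fderiv ?_
    ext v
    simp [matCLM_apply]
  · have h := ((hasFDerivAt_prod_sub (l i) id u).neg).mul_const (node l i)⁻¹
    refine h.congr_fderiv ?_
    ext v
    simp [matCLM_apply, Lagrange.eval_nodal, Finset.mul_sum]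
    refine Finset.sum_congr rfl fun j _ => by ring

lemma hasFDerivAt_wmap {n : ℕ} (u v : Fin (n + 1) → ℝ) :
    HasFDerivAt (wmap u) (matCLM (Matrix.of fun j =>
      Fin.cons ((Lagrange.nodal univ fun i : Fin n => v i.succ).eval (u j) / node u j) fun i =>
      -(v 0 * (Lagrange.nodal (univ.erase i) fun i : Fin n => v i.succ).eval (u j) / node u j)))
      v := by
  rw [hasFDerivAt_pi']
  intro j
  have h := ((hasFDerivAt_apply (𝕜 := ℝ) (0 : Fin (n + 1)) v).mul
    (hasFDerivAt_prod_sub (u j) (Fin.succ : Fin n → Fin (n + 1)) v)).mul_const (node u j)⁻¹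
  refine h.congr_fderiv ?_
  ext t
  simp [matCLM_apply, Lagrange.eval_nodal, Finset.mul_sum, Fin.sum_univ_succ]
  rw [add_comm]
  congr 1
  · ring
  · simp only [← Finset.sum_neg_distrib]
    refine Finset.sum_congr rfl fun k _ => ?_
    ring

lemma measurableSet_interlace {n : ℕ} :
    MeasurableSet {p : (Fin n → ℝ) × (Fin (n + 1) → ℝ) | Interlace p.1 p.2} := by
  simp only [Interlace, Set.ofPred_forall, Set.ofPred_and]
  refine MeasurableSet.iInter fun i => MeasurableSet.inter ?_ ?_
  · exact measurableSet_lt (by fun_prop) (by fun_prop)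
  · exact measurableSet_lt (by fun_prop) (by fun_prop)

lemma measurableSet_interlace_left {n : ℕ} (l : Fin n → ℝ) :
    MeasurableSet {u | Interlace l u} :=
  measurableSet_interlace.preimage (measurable_prodMk_left (x := l))

lemma measurableSet_interlace_right {n : ℕ} (u : Fin (n + 1) → ℝ) :
    MeasurableSet {l | Interlace l u} :=
  measurableSet_interlace.preimage (measurable_prodMk_right (y := u))

lemma measurableSet_wdom {n : ℕ} (u : Fin (n + 1) → ℝ) : MeasurableSet (wdom u) := by
  refine MeasurableSet.inter (measurableSet_lt measurable_const (measurable_pi_apply 0)) ?_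
  exact (measurableSet_interlace_right u).preimage
    (measurable_pi_lambda _ fun i => measurable_pi_apply _)

/-- The integral of `exp(−h²/2) ∏ q_i^{-1/2} e^{-q_i}` over the border data `v = (h, q)`, `q > 0`. -/
noncomputable def massQ (n : ℕ) : ENNReal :=
  ∫⁻ v in {v : Fin (n + 1) → ℝ | ∀ i : Fin n, 0 < v i.succ},
    ENNReal.ofReal (exp (-v 0 ^ 2 / 2) *
      ((√(∏ i : Fin n, v i.succ))⁻¹ * exp (-∑ i : Fin n, v i.succ)))

/-- Integration over the spectra `u` of all bordered matrices with fixed principal minor. -/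
lemma lintegral_roots {n : ℕ} {l : Fin n → ℝ} (hl : StrictMono l) :
    ∫⁻ u in {u | Interlace l u},
      ENNReal.ofReal (vdm u * (√(cross l u))⁻¹ * exp (-(∑ j, u j ^ 2) / 2)) =
    ENNReal.ofReal (exp (-(∑ i, l i ^ 2) / 2)) * massQ n := by
  rw [massQ, ← qmap_image hl, lintegral_image_eq_lintegral_abs_det_fderiv_mul volume
    (measurableSet_interlace_left l) (fun u _ => (hasFDerivAt_qmap l u).hasFDerivWithinAt)
    (qmap_injOn l), ← lintegral_const_mul' _ _ ENNReal.ofReal_ne_top]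
  refine setLIntegral_congr_fun (measurableSet_interlace_left l) fun u hu => ?_
  have hu : Interlace l u := hu
  have hvl := vdm_pos hl.injective
  have hvu := vdm_nonneg u
  have hc := cross_pos hu
  have hq : ∏ i : Fin n, qmap l u i.succ = cross l u / vdm l ^ 2 := by
    rw [← prod_abs_node, cross, ← Finset.prod_div_distrib]
    exact Finset.prod_congr rfl fun i _ => qmap_succ hu i
  rw [det_matCLM, abs_det_borderMat hl.injective hu.strictMono_right.injective,
    ← ENNReal.ofReal_mul (by positivity), ← ENNReal.ofReal_mul (by positivity), hq,
    sqrt_div hc.le, sqrt_sq hvl.le, sum_sq_eq hl.injective]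
  congr 1
  have : -(∑ i, l i ^ 2 + qmap l u 0 ^ 2 + 2 * ∑ i : Fin n, qmap l u i.succ) / 2 =
    -(∑ i, l i ^ 2) / 2 + (-qmap l u 0 ^ 2 / 2 + -∑ i : Fin n, qmap l u i.succ) := by ring
  rw [this, exp_add, exp_add]
  field_simp

/-- The integral of `∏ w_j^{-1/2} e^{-w_j}` over `(0,∞)^n`. -/
noncomputable def massW (n : ℕ) : ENNReal :=
  ∫⁻ w in {w : Fin n → ℝ | ∀ j, 0 < w j},
    ENNReal.ofReal ((√(∏ j, w j))⁻¹ * exp (-∑ j, w j))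

lemma lintegral_split {n : ℕ} {F : ℝ → ENNReal} {G : (Fin n → ℝ) → ENNReal} (hF : Measurable F)
    (hG : Measurable G) :
    ∫⁻ v : Fin (n + 1) → ℝ, F (v 0) * G (fun i => v i.succ) = (∫⁻ x, F x) * ∫⁻ y, G y := by
  rw [← lintegral_prod_mul hF.aemeasurable hG.aemeasurable]
  exact (volume_preserving_piFinSuccAbove (fun _ : Fin (n + 1) => ℝ) 0).lintegral_comp
    (f := fun p : ℝ × (Fin n → ℝ) => F p.1 * G p.2)
    ((hF.comp measurable_fst).mul (hG.comp measurable_snd))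

lemma measurable_vdm {n : ℕ} : Measurable (vdm (n := n)) := by
  unfold vdm; fun_prop

lemma measurable_cross {n : ℕ} :
    Measurable fun p : (Fin n → ℝ) × (Fin (n + 1) → ℝ) => cross p.1 p.2 := by
  unfold cross; fun_prop

/-- The Dixon–Anderson integral with all exponents `−1/2`, in homogeneous form. -/
lemma lintegral_critical {n : ℕ} {u : Fin (n + 1) → ℝ} (hu : StrictMono u) :
    massW (n + 1) = (∫⁻ r in Set.Ioi (0 : ℝ), ENNReal.ofReal (r ^ n / √(r ^ (n + 1)) * exp (-r))) *
      ∫⁻ l in {l | Interlace l u}, ENNReal.ofReal (vdm l * (√(cross l u))⁻¹) := by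
  rw [massW, ← wmap_image hu, lintegral_image_eq_lintegral_abs_det_fderiv_mul volume
    (measurableSet_wdom u) (fun v _ => (hasFDerivAt_wmap u v).hasFDerivWithinAt)
    (wmap_injOn hu.injective), ← lintegral_indicator measurableSet_Ioi,
    ← lintegral_indicator (measurableSet_interlace_right u),
    ← lintegral_indicator (measurableSet_wdom u), ← lintegral_split]
  · refine lintegral_congr fun v => ?_
    by_cases hv : v ∈ wdom u
    · obtain ⟨hv0, hv1⟩ := id hv
      have hvu := vdm_pos hu.injective
      have hc := cross_pos hv1
      have hw : ∏ j, wmap u v j =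
          v 0 ^ (n + 1) * (cross (fun i : Fin n => v i.succ) u / vdm u ^ 2) := by
        rw [← prod_abs_node, cross, Finset.prod_comm, ← Finset.prod_div_distrib,
          Finset.prod_congr rfl fun j _ => wmap_apply hv1 j, Finset.prod_mul_distrib]
        simp
      rw [Set.indicator_of_mem hv, Set.indicator_of_mem (show v 0 ∈ Set.Ioi 0 from hv0),
        Set.indicator_of_mem (show (fun i : Fin n => v i.succ) ∈ {l | Interlace l u} from hv1),
        det_matCLM, abs_det_residueMat hv1.strictMono_left.injective hu.injective,
        ← ENNReal.ofReal_mul (by have := vdm_nonneg (fun i : Fin n => v i.succ); positivity),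
        ← ENNReal.ofReal_mul (by positivity), hw, sum_wmap hu.injective,
        sqrt_mul (by positivity), sqrt_div hc.le, sqrt_sq hvu.le, abs_of_pos hv0]
      congr 1
      field_simp
    · rw [Set.indicator_of_notMem hv]
      by_cases hv0 : 0 < v 0
      · rw [Set.indicator_of_notMem (s := {l | Interlace l u}), mul_zero]
        exact fun h => hv ⟨hv0, h⟩
      · rw [Set.indicator_of_notMem (s := Set.Ioi (0 : ℝ)), zero_mul]
        exact hv0
  · exact Measurable.indicator (by fun_prop) measurableSet_Ioi
  · refine Measurable.indicator ?_ (measurableSet_interlace_right u)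
    exact (measurable_vdm.mul
      (measurable_cross.comp (measurable_prodMk_right (y := u))).sqrt.inv).ennreal_ofReal

/-! ### Evaluation of the constants -/

/-- `∫_0^∞ x^{-1/2} e^{-x} dx`, as an extended nonnegative real. -/
noncomputable def halfMass : ENNReal :=
  ∫⁻ x in Set.Ioi (0 : ℝ), ENNReal.ofReal ((√x)⁻¹ * exp (-x))

lemma lintegral_gamma {s : ℝ} (hs : 0 < s) {f : ℝ → ℝ}
    (hf : ∀ x, 0 < x → f x = exp (-x) * x ^ (s - 1)) :
    ∫⁻ x in Set.Ioi (0 : ℝ), ENNReal.ofReal (f x) = ENNReal.ofReal (Gamma s) := by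
  rw [Gamma_eq_integral hs, ofReal_integral_eq_lintegral_ofReal (GammaIntegral_convergent hs)]
  · exact setLIntegral_congr_fun measurableSet_Ioi fun x hx => by simp only [hf x hx]
  · filter_upwards [ae_restrict_mem measurableSet_Ioi] with x hx
    have : 0 < x := hx
    positivity

lemma halfMass_eq : halfMass = ENNReal.ofReal √π := by
  rw [halfMass, lintegral_gamma (s := 1 / 2) (by norm_num), Gamma_one_half_eq]
  intro x hx
  rw [sqrt_eq_rpow, ← rpow_neg hx.le, mul_comm]
  norm_num

lemma lintegral_radial (n : ℕ) :
    ∫⁻ r in Set.Ioi (0 : ℝ), ENNReal.ofReal (r ^ n / √(r ^ (n + 1)) * exp (-r)) =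
      ENNReal.ofReal (Gamma (((n : ℝ) + 1) / 2)) := by
  refine lintegral_gamma (by positivity) fun x hx => ?_
  rw [sqrt_eq_rpow, ← rpow_natCast, ← rpow_natCast, ← rpow_mul hx.le, ← rpow_sub hx, mul_comm]
  congr 2
  push_cast
  ring

lemma massW_eq (n : ℕ) : massW n = halfMass ^ n := by
  set f : ℝ → ENNReal := (Set.Ioi 0).indicator fun x => ENNReal.ofReal ((√x)⁻¹ * exp (-x)) with hf
  have hfm : Measurable f := Measurable.indicator (by fun_prop) measurableSet_Ioi
  have h1 : ∀ n, ∫⁻ w : Fin n → ℝ, ∏ j, f (w j) = halfMass ^ n := by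
    intro n
    induction n with
    | zero => simp [lintegral_unique, volume_pi]
    | succ n ih =>
      simp only [Fin.prod_univ_succ]
      rw [lintegral_split (G := fun w => ∏ j, f (w j)) hfm (by fun_prop), ih, halfMass,
        ← lintegral_indicator measurableSet_Ioi, ← hf, pow_succ']
  have hm : MeasurableSet {w : Fin n → ℝ | ∀ j, 0 < w j} := by
    simp only [Set.ofPred_forall]
    exact MeasurableSet.iInter fun j => measurableSet_lt measurable_const (measurable_pi_apply j)
  rw [← h1, massW, ← lintegral_indicator hm]
  refine lintegral_congr fun w => ?_
  by_cases hw : ∀ j, 0 < w j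
  · rw [Set.indicator_of_mem (show w ∈ {w : Fin n → ℝ | ∀ j, 0 < w j} from hw),
      Finset.prod_congr rfl fun j _ => Set.indicator_of_mem (show w j ∈ Set.Ioi 0 from hw j) _,
      ← ENNReal.ofReal_prod_of_nonneg (fun j _ => by positivity), Finset.prod_mul_distrib,
      ← exp_sum, Finset.sum_neg_distrib, Finset.prod_inv_distrib,
      sqrt_prod _ fun j _ => (hw j).le]
  · rw [Set.indicator_of_notMem (show w ∉ {w : Fin n → ℝ | ∀ j, 0 < w j} from hw)]
    push Not at hw
    obtain ⟨j, hj⟩ := hw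
    exact (Finset.prod_eq_zero (mem_univ j)
      (Set.indicator_of_notMem (fun h : 0 < w j => h.not_ge hj) _)).symm

lemma massQ_eq (n : ℕ) : massQ n = ENNReal.ofReal √(2 * π) * halfMass ^ n := by
  have hm : MeasurableSet {w : Fin n → ℝ | ∀ j, 0 < w j} := by
    simp only [Set.ofPred_forall]
    exact MeasurableSet.iInter fun j => measurableSet_lt measurable_const (measurable_pi_apply j)
  have hm' : MeasurableSet {v : Fin (n + 1) → ℝ | ∀ i : Fin n, 0 < v i.succ} :=
    hm.preimage (measurable_pi_lambda (fun (v : Fin (n + 1) → ℝ) i => v (Fin.succ i))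
      fun i => measurable_pi_apply _)
  have hg : ∫⁻ x : ℝ, ENNReal.ofReal (exp (-x ^ 2 / 2)) = ENNReal.ofReal √(2 * π) := by
    have h := integral_gaussian (1 / 2)
    have h' := integrable_exp_neg_mul_sq (b := 1 / 2) (by norm_num)
    rw [show 2 * π = π / (1 / 2) by ring, ← h,
      ofReal_integral_eq_lintegral_ofReal h' (ae_of_all _ fun x => (exp_pos _).le)]
    refine lintegral_congr fun x => ?_
    congr 2
    ring
  rw [← massW_eq, ← hg, massQ, massW, ← lintegral_indicator hm', ← lintegral_indicator hm,
    ← lintegral_split (by fun_prop) (Measurable.indicator (by fun_prop) hm)]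
  refine lintegral_congr fun v => ?_
  by_cases hv : ∀ i : Fin n, 0 < v i.succ
  · rw [Set.indicator_of_mem (show v ∈ {v : Fin (n + 1) → ℝ | ∀ i : Fin n, 0 < v i.succ} from hv),
      Set.indicator_of_mem
        (show (fun i : Fin n => v i.succ) ∈ {w : Fin n → ℝ | ∀ j, 0 < w j} from hv),
      ENNReal.ofReal_mul (exp_pos _).le]
  · rw [Set.indicator_of_notMem
        (show v ∉ {v : Fin (n + 1) → ℝ | ∀ i : Fin n, 0 < v i.succ} from hv),
      Set.indicator_of_notMem
        (show (fun i : Fin n => v i.succ) ∉ {w : Fin n → ℝ | ∀ j, 0 < w j} from hv), mul_zero]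

/-! ### Assembly -/

/-- The Mehta integral over the chamber `x_0 < ⋯ < x_{n-1}`. -/
noncomputable def chamber (n : ℕ) : ENNReal :=
  ∫⁻ x in {x : Fin n → ℝ | StrictMono x}, ENNReal.ofReal (vdm x * exp (-(∑ i, x i ^ 2) / 2))

lemma measurableSet_strictMono (n : ℕ) : MeasurableSet {x : Fin n → ℝ | StrictMono x} := by
  simp only [StrictMono, Set.ofPred_forall]
  exact MeasurableSet.iInter fun i => MeasurableSet.iInter fun j => MeasurableSet.iInter fun _ =>
    measurableSet_lt (measurable_pi_apply i) (measurable_pi_apply j)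

/-- The two iterated integrals of the kernel over interlacing pairs `(l, u)` agree. -/
lemma chamber_succ (n : ℕ) :
    ENNReal.ofReal (Gamma (((n : ℝ) + 1) / 2)) * (massQ n * chamber n) =
      massW (n + 1) * chamber (n + 1) := by
  set K : (Fin n → ℝ) → (Fin (n + 1) → ℝ) → ENNReal := fun l u =>
    {p : (Fin n → ℝ) × (Fin (n + 1) → ℝ) | Interlace p.1 p.2}.indicator
      (fun p => ENNReal.ofReal (vdm p.1 * (vdm p.2 * (√(cross p.1 p.2))⁻¹ *
        exp (-(∑ j, p.2 j ^ 2) / 2)))) (l, u) with hK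
  have hKm : Measurable (Function.uncurry K) := by
    refine Measurable.indicator ?_ measurableSet_interlace
    refine Measurable.ennreal_ofReal ?_
    exact (measurable_vdm.comp measurable_fst).mul
      (((measurable_vdm.comp measurable_snd).mul measurable_cross.sqrt.inv).mul (by fun_prop))
  have hl : ∫⁻ l, ∫⁻ u, K l u = massQ n * chamber n := by
    rw [chamber, ← lintegral_indicator (measurableSet_strictMono n), ← lintegral_const_mul]
    · refine lintegral_congr fun l => ?_
      by_cases hl : StrictMono l
      · rw [Set.indicator_of_mem (show l ∈ {x : Fin n → ℝ | StrictMono x} from hl),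
          ENNReal.ofReal_mul (vdm_nonneg l), mul_left_comm, mul_comm (massQ n),
          ← lintegral_roots hl, ← lintegral_const_mul' _ _ ENNReal.ofReal_ne_top,
          ← lintegral_indicator (measurableSet_interlace_left l)]
        refine lintegral_congr fun u => ?_
        by_cases hlu : Interlace l u
        · rw [hK, Set.indicator_of_mem (show u ∈ {u | Interlace l u} from hlu)]
          simp only
          rw [Set.indicator_of_mem (by exact hlu), ENNReal.ofReal_mul (vdm_nonneg l)]
        · rw [hK, Set.indicator_of_notMem (show u ∉ {u | Interlace l u} from hlu)]
          exact Set.indicator_of_notMem hlu _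
      · rw [Set.indicator_of_notMem (show l ∉ {x : Fin n → ℝ | StrictMono x} from hl), mul_zero]
        refine (lintegral_congr fun u => ?_).trans lintegral_zero
        exact Set.indicator_of_notMem (fun h : Interlace l u => hl h.strictMono_left) _
    · exact Measurable.indicator ((measurable_vdm.mul (by fun_prop)).ennreal_ofReal)
        (measurableSet_strictMono n)
  have hu : ENNReal.ofReal (Gamma (((n : ℝ) + 1) / 2)) * ∫⁻ u, ∫⁻ l, K l u =
      massW (n + 1) * chamber (n + 1) := by
    rw [chamber, ← lintegral_const_mul' _ _ ENNReal.ofReal_ne_top,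
      ← lintegral_indicator (measurableSet_strictMono (n + 1)), ← lintegral_const_mul]
    · refine lintegral_congr fun u => ?_
      by_cases hu : StrictMono u
      · rw [Set.indicator_of_mem (show u ∈ {x : Fin (n + 1) → ℝ | StrictMono x} from hu),
          lintegral_critical hu, ← lintegral_radial, mul_assoc]
        congr 1
        rw [mul_comm, ← lintegral_const_mul' _ _ ENNReal.ofReal_ne_top,
          ← lintegral_indicator (measurableSet_interlace_right u)]
        refine lintegral_congr fun l => ?_
        by_cases hlu : Interlace l u
        · have := vdm_nonneg u
          rw [hK, Set.indicator_of_mem (show l ∈ {l | Interlace l u} from hlu)]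
          simp only
          rw [Set.indicator_of_mem (by exact hlu), ← ENNReal.ofReal_mul (by positivity)]
          congr 1
          ring
        · rw [hK, Set.indicator_of_notMem (show l ∉ {l | Interlace l u} from hlu)]
          exact Set.indicator_of_notMem hlu _
      · rw [Set.indicator_of_notMem (show u ∉ {x : Fin (n + 1) → ℝ | StrictMono x} from hu),
          mul_zero]
        have : ∀ l, K l u = 0 := fun l =>
          Set.indicator_of_notMem (fun h : Interlace l u => hu h.strictMono_right) _
        simp [this]
    · exact Measurable.indicator ((measurable_vdm.mul (by fun_prop)).ennreal_ofReal)
        (measurableSet_strictMono (n + 1))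
  rw [← hl, ← hu, lintegral_lintegral_swap hKm.aemeasurable]

lemma vdm_comp_perm {n : ℕ} (x : Fin n → ℝ) (σ : Equiv.Perm (Fin n)) :
    vdm (x ∘ σ) = vdm x := by
  have h : vdm (x ∘ σ) ^ 2 = vdm x ^ 2 := by
    rw [← prod_abs_node, ← prod_abs_node, ← Equiv.prod_comp σ fun j => |node x j|]
    refine Finset.prod_congr rfl fun j _ => ?_
    congr 1
    refine Finset.prod_bij (fun k _ => σ k) ?_ ?_ ?_ ?_
    · intro k hk; simpa using hk
    · intro a _ b _ h; exact σ.injective h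
    · intro b hb
      refine ⟨σ.symm b, ?_, by simp⟩
      simp only [mem_erase, mem_univ, and_true] at hb ⊢
      rintro rfl; simp at hb
    · intro k _; rfl
  exact (pow_left_inj₀ (vdm_nonneg _) (vdm_nonneg _) two_ne_zero).1 h

lemma vdm_eq_zero {n : ℕ} {x : Fin n → ℝ} (hx : ¬ Function.Injective x) : vdm x = 0 := by
  simp only [Function.Injective, not_forall] at hx
  obtain ⟨i, j, hij, hne⟩ := hx
  rw [vdm]
  rcases lt_or_gt_of_ne hne with h | h
  · exact Finset.prod_eq_zero (mem_univ i)
      (Finset.prod_eq_zero (i := j) (by simpa using h) (by simp [hij]))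
  · exact Finset.prod_eq_zero (mem_univ j)
      (Finset.prod_eq_zero (i := i) (by simpa using h) (by simp [hij]))

/-- The integrand is symmetric and vanishes where two coordinates agree, so it is pointwise the sum
of its restrictions to the `n!` open chambers. -/
lemma lintegral_eq_chamber (n : ℕ) :
    ∫⁻ x : Fin n → ℝ, ENNReal.ofReal (vdm x * exp (-(∑ i, x i ^ 2) / 2)) =
      n.factorial * chamber n := by
  set F : (Fin n → ℝ) → ENNReal := {x : Fin n → ℝ | StrictMono x}.indicator
    fun x => ENNReal.ofReal (vdm x * exp (-(∑ i, x i ^ 2) / 2)) with hF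
  have hFm : Measurable F := Measurable.indicator
    ((measurable_vdm.mul (by fun_prop)).ennreal_ofReal) (measurableSet_strictMono n)
  have h1 : ∀ x : Fin n → ℝ, ENNReal.ofReal (vdm x * exp (-(∑ i, x i ^ 2) / 2)) =
      ∑ σ : Equiv.Perm (Fin n), F (x ∘ σ) := by
    intro x
    by_cases hx : Function.Injective x
    · have hs : StrictMono (x ∘ Tuple.sort x) :=
        (Tuple.monotone_sort x).strictMono_of_injective (hx.comp (Tuple.sort x).injective)
      rw [Finset.sum_eq_single (Tuple.sort x)]
      · rw [hF, Set.indicator_of_mem (show x ∘ Tuple.sort x ∈ {x | StrictMono x} from hs),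
          vdm_comp_perm]
        simp only [Function.comp_apply]
        rw [Equiv.sum_comp (Tuple.sort x) fun i => x i ^ 2]
      · intro σ _ hσ
        refine Set.indicator_of_notMem (fun h : StrictMono (x ∘ σ) => hσ ?_) _
        have := Tuple.unique_monotone h.monotone hs.monotone
        ext i
        exact congrArg Fin.val (hx (congrFun this i))
      · simp
    · rw [vdm_eq_zero hx, zero_mul, ENNReal.ofReal_zero]
      refine (Finset.sum_eq_zero fun σ _ => ?_).symm
      refine Set.indicator_of_notMem (fun h : StrictMono (x ∘ σ) => hx ?_) _
      have := h.injective.comp σ.symm.injective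
      simpa [Function.comp_assoc] using this
  have h2 : ∀ σ : Equiv.Perm (Fin n), ∫⁻ x, F (x ∘ σ) = chamber n := by
    intro σ
    rw [chamber, ← lintegral_indicator (measurableSet_strictMono n)]
    have := (volume_measurePreserving_piCongrLeft (fun _ : Fin n => ℝ) σ.symm).lintegral_comp hFm
    rw [← hF, ← this]
    refine lintegral_congr fun x => ?_
    congr 1
    ext i
    have := MeasurableEquiv.piCongrLeft_apply_apply (β := fun _ => ℝ) σ.symm x (σ i)
    simpa using this.symm
  rw [lintegral_congr h1, lintegral_finsetSum (f := fun (σ : Equiv.Perm (Fin n)) x => F (x ∘ σ)) _ fun σ _ =>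
    hFm.comp (measurable_pi_lambda _ fun i => measurable_pi_apply _)]
  simp [h2, Fintype.card_perm]

lemma mehtaZ_eq_s2 (n : ℕ) : mehtaZ n = n.factorial * (chamber n).toReal := by
  have h : ∀ x : Fin n → ℝ,
      (∏ i : Fin n, ∏ j ∈ Finset.univ.filter (fun j => i < j), |x i - x j|) *
        ∏ i : Fin n, Real.exp (-(x i) ^ 2 / 2) = vdm x * exp (-(∑ i, x i ^ 2) / 2) := by
    intro x
    rw [← exp_sum, ← Finset.sum_div, Finset.sum_neg_distrib, vdm]
  rw [mehtaZ]
  simp only [h]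
  rw [integral_eq_lintegral_of_nonneg_ae
    (ae_of_all _ fun x => mul_nonneg (vdm_nonneg x) (exp_pos _).le)
    (measurable_vdm.mul (by fun_prop)).aestronglyMeasurable, lintegral_eq_chamber,
    ENNReal.toReal_mul, ENNReal.toReal_natCast]

/-- For every integer `m ≥ 1`, `Z_{m+1} = 2^{3/2} Γ((m+3)/2) ⬝ Z_m`. -/
theorem mehtaZ_succ_ratio (m : ℕ) (hm : 1 ≤ m) :
    mehtaZ (m + 1) = (2 : ℝ) ^ ((3 : ℝ) / 2) * Real.Gamma (((m : ℝ) + 3) / 2) * mehtaZ m := by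
  have hpi : 0 < √π := sqrt_pos.2 pi_pos
  have h := congrArg ENNReal.toReal (chamber_succ m)
  simp only [massQ_eq, massW_eq, halfMass_eq, ENNReal.toReal_mul, ENNReal.toReal_pow,
    ENNReal.toReal_ofReal hpi.le, ENNReal.toReal_ofReal (sqrt_nonneg _),
    ENNReal.toReal_ofReal (Gamma_pos_of_pos (s := ((m : ℝ) + 1) / 2) (by positivity)).le] at h
  rw [sqrt_mul (by norm_num), pow_succ] at h
  have h' : Gamma (((m : ℝ) + 1) / 2) * √2 * (chamber m).toReal = (chamber (m + 1)).toReal := by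
    have hp : √π ^ m * √π ≠ 0 := by positivity
    refine mul_left_cancel₀ hp ?_
    rw [← h]
    ring
  have hG : Gamma (((m : ℝ) + 3) / 2) = ((m : ℝ) + 1) / 2 * Gamma (((m : ℝ) + 1) / 2) := by
    rw [← Gamma_add_one (by positivity)]
    congr 1
    ring
  have h2 : (2 : ℝ) ^ ((3 : ℝ) / 2) = 2 * √2 := by
    rw [sqrt_eq_rpow, show (3 : ℝ) / 2 = 1 + 1 / 2 by norm_num, rpow_add (by norm_num), rpow_one]
  rw [mehtaZ_eq_s2, mehtaZ_eq_s2, ← h', hG, h2, Nat.factorial_succ]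
  push_cast
  ring
end

section
/- Let X : Ω → ℝ^n and Y : Ω → ℝ^p be centered, jointly Gaussian random vectors on a probability space (Ω, F, P) (the law of (X, Y) on ℝ^{n+p} is a centered Gaussian measure), with Σ_X = (Cov(X_i, X_j))_{i,j} invertible, C = (Cov(Y_j, X_i))_{j,i}, and R = C Σ_X^{-1}. Then for each coordinate j, the conditional expectation of Y_j given the σ-algebra generated by X equals the j-th coordinate of R X almost surely: E[Y_j ‖ σ(X)] = (R X)_j a.s. -/
/-!
The regression matrix is the solution of the normal equations `R Σ_X = C`, which say exactly that
the residual `Z = Y - RX` is uncorrelated with `X`. Since `(X, Z)` is a linear image of the Gaussian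
vector `(X, Y)`, it is jointly Gaussian, so uncorrelatedness upgrades to independence
(`HasGaussianLaw.indepFun_of_covariance_eval`). Hence `E[Z_j ‖ σ(X)] = E[Z_j] = 0`, while `(RX)_j`
is `σ(X)`-measurable, and adding the two gives the formula. `IsCenteredGaussianLaw.hasGaussianLaw`
and `covRV_eq_covariance` connect the definitions used here with Mathlib's Gaussian laws and
covariance.
-/

open MeasureTheory ProbabilityTheory Matrix

/-- `Cov(U,V) = E[UV] − E[U]E[V]`. -/
noncomputable def covRV {Ω : Type*} [MeasurableSpace Ω] (P : Measure Ω) (U V : Ω → ℝ) : ℝ :=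
  (∫ ω, U ω * V ω ∂P) - (∫ ω, U ω ∂P) * (∫ ω, V ω ∂P)

/-- The law of the random vector `W` is a centered Gaussian measure: every linear functional
of `W` has a centered one-dimensional Gaussian distribution. -/
def IsCenteredGaussianLaw {Ω ι : Type*} [MeasurableSpace Ω] [Fintype ι]
    (P : Measure Ω) (W : Ω → ι → ℝ) : Prop :=
  ∀ a : ι → ℝ, ∃ s : NNReal,
    Measure.map (fun ω => ∑ i, a i * W ω i) P = gaussianReal 0 s

/-- Every continuous linear functional on `ι → ℝ` is a linear combination of coordinates, so
`IsCenteredGaussianLaw` covers all of them and the law is Gaussian in Mathlib's sense. -/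
theorem IsCenteredGaussianLaw.hasGaussianLaw {Ω ι : Type*} [MeasurableSpace Ω] [Fintype ι]
    {P : Measure Ω} {W : Ω → ι → ℝ} (hW : IsCenteredGaussianLaw P W) (hWm : Measurable W) :
    HasGaussianLaw W P where
  isGaussian_map := by
    classical
    refine isGaussian_of_map_eq_gaussianReal fun L => ?_
    obtain ⟨s, hs⟩ := hW fun i => L (Pi.single i 1)
    refine ⟨0, s, ?_⟩
    rw [← hs, Measure.map_map (by fun_prop) hWm]
    congr 1
    ext ω
    have h := congrArg L (pi_eq_sum_univ' (W ω))
    rw [map_sum] at h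
    simp only [Function.comp_apply]
    rw [h]
    refine Finset.sum_congr rfl fun i _ => ?_
    rw [map_smul, smul_eq_mul, mul_comm]

theorem covRV_eq_covariance {Ω : Type*} [MeasurableSpace Ω] {P : Measure Ω}
    [IsProbabilityMeasure P] {U V : Ω → ℝ} (hU : MemLp U 2 P) (hV : MemLp V 2 P) :
    covRV P U V = cov[U, V; P] := by
  rw [covariance_eq_sub hU hV]
  rfl

/-- Gaussian regression formula for conditional expectations: if `X, Y` are centered
jointly Gaussian with `Σ_X` invertible, `C` the cross-covariance matrix and `R = C Σ_X⁻¹`,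
then for each coordinate `j`, `E[Y_j ‖ σ(X)] = (R X)_j` almost surely. -/
theorem gaussian_regression_condexp (n p : ℕ)
    {Ω : Type*} [MeasurableSpace Ω] (P : Measure Ω) [IsProbabilityMeasure P]
    (X : Ω → Fin n → ℝ) (Y : Ω → Fin p → ℝ)
    (hXm : Measurable X) (hYm : Measurable Y)
    (hcentX : ∀ i, (∫ ω, X ω i ∂P) = 0) (hcentY : ∀ j, (∫ ω, Y ω j ∂P) = 0)
    (hGauss : IsCenteredGaussianLaw P (fun ω => Sum.elim (X ω) (Y ω)))
    (SigX : Matrix (Fin n) (Fin n) ℝ)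
    (hSigX : ∀ i j, SigX i j = covRV P (fun ω => X ω i) (fun ω => X ω j))
    (C : Matrix (Fin p) (Fin n) ℝ)
    (hC : ∀ j i, C j i = covRV P (fun ω => Y ω j) (fun ω => X ω i))
    (hinv : IsUnit SigX)
    (R : Matrix (Fin p) (Fin n) ℝ) (hR : R = C * SigX⁻¹) :
    ∀ j : Fin p,
      P[(fun ω => Y ω j)|MeasurableSpace.comap X inferInstance] =ᵐ[P]
        fun ω => R.mulVec (X ω) j := by
  have hW : HasGaussianLaw (fun ω => Sum.elim (X ω) (Y ω)) P := by
    refine hGauss.hasGaussianLaw (measurable_pi_lambda _ ?_)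
    rintro (i | j)
    · exact (measurable_pi_apply i).comp hXm
    · exact (measurable_pi_apply j).comp hYm
  have hX2 (i : Fin n) : MemLp (fun ω => X ω i) 2 P :=
    (hW.map_fun (ContinuousLinearMap.proj (Sum.inl i))).memLp_two
  have hY2 (j : Fin p) : MemLp (fun ω => Y ω j) 2 P :=
    (hW.map_fun (ContinuousLinearMap.proj (Sum.inr j))).memLp_two
  have hRX2 (j : Fin p) : MemLp (fun ω => ∑ k, R j k * X ω k) 2 P :=
    memLp_finsetSum _ fun k _ => (hX2 k).const_mul _
  -- Invertibility of `Σ_X` enters only here: `R` solves the normal equations.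
  have hnormal : R * SigX = C := by
    rw [hR, Matrix.mul_assoc, Matrix.nonsing_inv_mul _ ((Matrix.isUnit_iff_isUnit_det _).1 hinv),
      Matrix.mul_one]
  have hcov (i : Fin n) (j : Fin p) :
      cov[fun ω => X ω i, fun ω => Y ω j - ∑ k, R j k * X ω k; P] = 0 := by
    rw [covariance_fun_sub_right (hX2 i) (hY2 j) (hRX2 j),
      covariance_fun_sum_right (fun k => (hX2 k).const_mul _) (hX2 i), covariance_comm,
      ← covRV_eq_covariance (hY2 j) (hX2 i), ← hC, ← hnormal, Matrix.mul_apply, sub_eq_zero]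
    refine Finset.sum_congr rfl fun k _ => ?_
    rw [covariance_const_mul_right, covariance_comm, ← covRV_eq_covariance (hX2 k) (hX2 i),
      ← hSigX]
  -- The pair `(X, Y - RX)` is a linear image of `(X, Y)`, hence jointly Gaussian.
  have hjoint : HasGaussianLaw
      (fun ω => (fun i => X ω i, fun j => Y ω j - ∑ k, R j k * X ω k)) P := by
    let L : (Fin n ⊕ Fin p → ℝ) →L[ℝ] (Fin n → ℝ) × (Fin p → ℝ) :=
      (ContinuousLinearMap.pi fun i => ContinuousLinearMap.proj (Sum.inl i)).prod
        (ContinuousLinearMap.pi fun j => ContinuousLinearMap.proj (Sum.inr j) -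
          ∑ k, R j k • ContinuousLinearMap.proj (Sum.inl k))
    convert! hW.map_fun L using 2 with ω
    ext <;> simp [L]
  have hind := hjoint.indepFun_of_covariance_eval
    (X := fun i ω => X ω i) (Y := fun j ω => Y ω j - ∑ k, R j k * X ω k) hcov
  intro j
  have hmX : MeasurableSpace.comap X inferInstance ≤ ‹MeasurableSpace Ω› := hXm.comap_le
  have hZm : Measurable fun ω => fun j => Y ω j - ∑ k, R j k * X ω k := by fun_prop
  have hRXm : StronglyMeasurable[MeasurableSpace.comap X inferInstance]
      fun ω => ∑ k, R j k * X ω k := by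
    have hg : Measurable fun x : Fin n → ℝ => ∑ k, R j k * x k := by fun_prop
    exact (hg.comp (comap_measurable X)).stronglyMeasurable
  have hRXint := (hRX2 j).integrable one_le_two
  have hYint := (hY2 j).integrable one_le_two
  have hmean : ∫ ω, (Y ω j - ∑ k, R j k * X ω k) ∂P = 0 := by
    rw [integral_sub hYint hRXint, hcentY,
      integral_finsetSum _ fun k _ => ((hX2 k).integrable one_le_two).const_mul _]
    simp [integral_const_mul, hcentX]
  have hresid : P[fun ω => Y ω j - ∑ k, R j k * X ω k|MeasurableSpace.comap X inferInstance]
      =ᵐ[P] fun _ => ∫ ω, (Y ω j - ∑ k, R j k * X ω k) ∂P :=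
    condExp_indep_eq hZm.comap_le hmX
      ((measurable_pi_apply j).comp
        (comap_measurable fun ω j => Y ω j - ∑ k, R j k * X ω k)).stronglyMeasurable hind.symm
  have hsub := condExp_sub hYint hRXint (MeasurableSpace.comap X inferInstance)
  rw [condExp_of_stronglyMeasurable hmX hRXm hRXint] at hsub
  filter_upwards [hresid, hsub] with ω h₁ h₂
  have h₃ := h₂.symm.trans h₁
  rw [hmean, Pi.sub_apply, sub_eq_zero] at h₃
  exact h₃
end
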